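/- arXiv:1704.07125 — 3 statements merged into one kernel-verified Lean document; each statement's English description precedes it below -/
import Mathlib

section
/- Let a_0 < a_1 < … < a_{l_0} < a' < a < x_0 < b < b' < a_{l_0+1} < … < a_l < a_{l+1} be real numbers and k_0, k_1, …, k_l positive integers, and set Z(x) := ∏_{j=1}^l (x − a_j)^{k_j}. Then there exists δ_1 > 0 such that for all sufficiently large m there exists a real polynomial Q of degree at most m satisfying: (i) Q(x_0) = 1; (ii) Q^{(j)}(x_0) = 0 for j = 1, …, k_0; (iii) |Q(x)| < 1 for all x ∈ [a_0, a_{l+1}] with x ≠ x_0; (iv) |Q(x) − 1| ≤ exp(−δ_1 m) for x ∈ [a, b]; (v) |Q(x)| ≤ min(1, |Z(x)|)·exp(−δ_1 m) for x ∈ [a_0, a'] ∪ [b', a_{l+1}]; (vi) Q is strictly monotone on [a', a] and on [b, b']; (vii) Q^{(κ)}(a_j) = 0 for j = 1, …, l and κ = 0, 1, …, k_j; (viii) Q(x) ≥ 0 for all x ∈ [a_0, a_{l+1}]. -/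
/-!
The polynomial is a composition `Q = g ∘ S`. The inner polynomial `S = V (1 - ε h²) ^ N` has fixed
degree: `V` is a nonnegative multiple of `Z²` with `V(x₀) = 1` and `V'(x₀) = 0`, and `h` is an
increasing polynomial with `h(x₀) = 0` and `h(a') = -h(b')`. A large power `N` makes `S` increase on
`[a', x₀]`, decrease on `[x₀, b']`, and separates its values on `[a, b]` from those outside
`(a', b')` by two levels `c₁ < c₂`. The outer polynomial `g` has degree proportional to `m` and maps
`[0, 1]` increasingly onto itself; its derivative is a multiple of
`(1 - t) ^ k₀ (1 - (t - c) ^ 2) ^ n` with `c` the midpoint of `c₁` and `c₂`, so that `g` is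
exponentially close to `0` below `c₁` and to `1` above `c₂`, and flat of order `k₀` at `1`.
-/

open Polynomial Set Filter Topology

section Divisibility

lemma iteratedDeriv_eval {𝕜 : Type*} [NontriviallyNormedField 𝕜] (p : 𝕜[X]) (n : ℕ) :
    iteratedDeriv n (fun x => p.eval x) = fun x => (derivative^[n] p).eval x := by
  induction n with
  | zero => simp
  | succ n ih =>
    funext x
    rw [iteratedDeriv_succ, ih, Function.iterate_succ_apply', Polynomial.deriv]

lemma iteratedDeriv_eval_eq_zero_of_pow_dvd {𝕜 : Type*} [NontriviallyNormedField 𝕜] {p : 𝕜[X]}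
    {x : 𝕜} {n j : ℕ} (h : (X - C x) ^ n ∣ p) (hj : j < n) :
    iteratedDeriv j (fun y => p.eval y) x = 0 := by
  rw [iteratedDeriv_eval]
  refine eval_eq_zero_of_dvd_of_eval_eq_zero (pow_sub_dvd_iterate_derivative_of_pow_dvd j h) ?_
  simp [Nat.sub_ne_zero_of_lt hj]

lemma iteratedDeriv_eval_eq_zero_of_pow_dvd_derivative {𝕜 : Type*} [NontriviallyNormedField 𝕜]
    {p : 𝕜[X]} {x : 𝕜} {n j : ℕ} (h : (X - C x) ^ n ∣ derivative p) (hj : 1 ≤ j) (hjn : j ≤ n) :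
    iteratedDeriv j (fun y => p.eval y) x = 0 := by
  obtain ⟨i, rfl⟩ := Nat.exists_eq_add_of_le' hj
  rw [iteratedDeriv_eval, Function.iterate_succ_apply, ← iteratedDeriv_eval]
  exact iteratedDeriv_eval_eq_zero_of_pow_dvd h hjn

lemma dvd_comp_of_eval_zero_eq_zero {R : Type*} [CommRing R] {g : R[X]} (hg : g.eval 0 = 0)
    (S : R[X]) : S ∣ g.comp S := by
  obtain ⟨q, rfl⟩ : X ∣ g := by rwa [X_dvd_iff, coeff_zero_eq_eval_zero]
  simp

lemma pow_dvd_derivative_comp {R : Type*} [CommRing R] {g S : R[X]} {x y : R} {k : ℕ}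
    (hg : (X - C y) ^ k ∣ derivative g) (hS : S.eval x = y) :
    (X - C x) ^ k ∣ derivative (g.comp S) := by
  have h_root : X - C x ∣ S - C y := by simp [dvd_iff_isRoot, hS]
  obtain ⟨q, hq⟩ := hg
  rw [derivative_comp, hq, mul_comp, pow_comp, sub_comp, X_comp, C_comp]
  exact ((pow_dvd_pow_of_dvd h_root k).mul_right _).mul_left _

lemma exists_abs_eval_le_mul_min_of_dvd {s : Set ℝ} (hs : IsCompact s) {Z S : ℝ[X]} (hZS : Z ∣ S)
    (hS : ∀ x ∈ s, |S.eval x| ≤ 1) :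
    ∃ B ≥ (1 : ℝ), ∀ x ∈ s, |S.eval x| ≤ B * min 1 |Z.eval x| := by
  obtain ⟨T, rfl⟩ := hZS
  obtain ⟨B, hB⟩ := hs.exists_bound_of_continuousOn T.continuousOn
  have hB₀ : 0 ≤ max 1 B := zero_le_one.trans (le_max_left 1 B)
  refine ⟨max 1 B, le_max_left 1 B, fun x hx => ?_⟩
  rw [mul_min_of_nonneg _ _ hB₀, le_min_iff, mul_one]
  refine ⟨(hS x hx).trans (le_max_left 1 B), ?_⟩
  rw [eval_mul, abs_mul, mul_comm]
  gcongr
  exact (hB x hx).trans (le_max_right 1 B)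

end Divisibility

section Asymptotics

lemma eventually_mul_pow_lt_mul_pow {ρ₁ ρ₂ m : ℝ} (M : ℝ) (hρ₁ : 0 ≤ ρ₁) (hρ : ρ₁ < ρ₂)
    (hm : 0 < m) : ∀ᶠ n : ℕ in atTop, M * ρ₁ ^ n < m * ρ₂ ^ n := by
  have hρ₂ : 0 < ρ₂ := hρ₁.trans_lt hρ
  have h_lim : Tendsto (fun n : ℕ => M * (ρ₁ / ρ₂) ^ n) atTop (𝓝 (M * 0)) :=
    (tendsto_pow_atTop_nhds_zero_of_lt_one (by positivity) ((div_lt_one hρ₂).2 hρ)).const_mul M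
  rw [mul_zero] at h_lim
  filter_upwards [h_lim.eventually_lt_const hm] with n hn
  rwa [div_pow, mul_div_assoc', div_lt_iff₀ (by positivity)] at hn

lemma exists_eventually_mul_pow_div_le_exp (K : ℝ) {r : ℝ} (hr₀ : 0 < r) (hr₁ : r < 1) {d : ℕ}
    (hd : 0 < d) :
    ∃ δ > (0 : ℝ), ∀ᶠ m : ℕ in atTop, K * r ^ (m / d) ≤ Real.exp (-(δ * m)) := by
  have : (0 : ℝ) < d := by exact_mod_cast hd
  have h_log : Real.log r < 0 := Real.log_neg hr₀ hr₁
  obtain ⟨δ, hδ⟩ : ∃ δ, δ = -Real.log r / (2 * d) := ⟨_, rfl⟩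
  have hδ₀ : 0 < δ := hδ ▸ div_pos (neg_pos.2 h_log) (by positivity)
  have h_log_eq : Real.log r = -(2 * δ * d) := by rw [hδ]; field_simp
  have h_pow : ∀ m : ℕ, r ^ (m / d) ≤ Real.exp (-(2 * δ * m) - Real.log r) := by
    intro m
    have hm : (m : ℝ) ≤ d * ((m / d : ℕ) + 1) := by
      exact_mod_cast (Nat.lt_mul_div_succ m hd).le
    rw [← Real.exp_log hr₀, ← Real.exp_nat_mul, Real.exp_le_exp, Real.log_exp, h_log_eq]
    nlinarith
  have h_lim : Tendsto (fun m : ℕ => Real.exp (δ * m + Real.log r)) atTop atTop :=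
    Real.tendsto_exp_atTop.comp <| tendsto_atTop_add_const_right _ _ <|
      tendsto_natCast_atTop_atTop.const_mul_atTop hδ₀
  refine ⟨δ, hδ₀, ?_⟩
  filter_upwards [h_lim.eventually_ge_atTop K] with m hm
  calc K * r ^ (m / d)
      ≤ Real.exp (δ * m + Real.log r) * Real.exp (-(2 * δ * m) - Real.log r) := by
        gcongr
        exact h_pow m
    _ = Real.exp (-(δ * m)) := by rw [← Real.exp_add]; ring_nf

lemma eventually_exists_separating_levels {α : Type*} [TopologicalSpace α] {s t : Set α}
    (hs : IsCompact s) (hs₀ : s.Nonempty) (ht : IsCompact t) (ht₀ : t.Nonempty) {V u : α → ℝ}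
    (hV : Continuous V) (hu : Continuous u) (hVs : ∀ x ∈ s, 0 ≤ V x) (hVt : ∀ y ∈ t, 0 < V y)
    (hus : ∀ x ∈ s, 0 ≤ u x) (hst : ∀ x ∈ s, ∀ y ∈ t, u x < u y) :
    ∀ᶠ n : ℕ in atTop, ∃ c₁ c₂ : ℝ, 0 ≤ c₁ ∧ c₁ < c₂ ∧
      (∀ x ∈ s, V x * u x ^ n ≤ c₁) ∧ ∀ y ∈ t, c₂ ≤ V y * u y ^ n := by
  obtain ⟨x₁, hx₁, hx₁_max⟩ := hs.exists_isMaxOn hs₀ hu.continuousOn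
  obtain ⟨x₂, hx₂, hx₂_max⟩ := hs.exists_isMaxOn hs₀ hV.continuousOn
  obtain ⟨y₁, hy₁, hy₁_min⟩ := ht.exists_isMinOn ht₀ hu.continuousOn
  obtain ⟨y₂, hy₂, hy₂_min⟩ := ht.exists_isMinOn ht₀ hV.continuousOn
  have hu_y₁ : 0 ≤ u y₁ := (hus x₁ hx₁).trans (hst x₁ hx₁ y₁ hy₁).le
  filter_upwards [eventually_mul_pow_lt_mul_pow (V x₂) (hus x₁ hx₁) (hst x₁ hx₁ y₁ hy₁)
    (hVt y₂ hy₂)] with n hn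
  refine ⟨V x₂ * u x₁ ^ n, V y₂ * u y₁ ^ n,
    mul_nonneg (hVs x₂ hx₂) (pow_nonneg (hus x₁ hx₁) n), hn, fun x hx => ?_, fun y hy => ?_⟩
  · exact mul_le_mul (hx₂_max hx) (pow_le_pow_left₀ (hus x hx) (hx₁_max hx) n)
      (pow_nonneg (hus x hx) n) (hVs x₂ hx₂)
  · exact mul_le_mul (hy₂_min hy) (pow_le_pow_left₀ hu_y₁ (hy₁_min hy) n)
      (pow_nonneg hu_y₁ n) (hVt y hy).le

end Asymptotics

section Step

/-- A strictly increasing function on `[0, 1]` with `g 0 = 0` and `g 1 = 1`: the outer function of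
the composition that turns a peak into a steeper one. -/
structure IsRamp (g : ℝ → ℝ) : Prop where
  map_zero : g 0 = 0
  map_one : g 1 = 1
  strictMonoOn : StrictMonoOn g (Icc 0 1)

lemma IsRamp.mapsTo {g : ℝ → ℝ} (hg : IsRamp g) : MapsTo g (Icc 0 1) (Icc 0 1) := by
  intro t ht
  have h₀ := hg.strictMonoOn.monotoneOn (left_mem_Icc.2 zero_le_one) ht ht.1
  have h₁ := hg.strictMonoOn.monotoneOn ht (right_mem_Icc.2 zero_le_one) ht.2
  rw [hg.map_zero] at h₀
  rw [hg.map_one] at h₁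
  exact ⟨h₀, h₁⟩

lemma exists_derivative_eq {K : Type*} [Field K] [CharZero K] (f : K[X]) :
    ∃ F : K[X], derivative F = f ∧ F.natDegree ≤ f.natDegree + 1 ∧ F.eval 0 = 0 := by
  refine ⟨∑ i ∈ Finset.range (f.natDegree + 1), C (f.coeff i / (i + 1)) * X ^ (i + 1),
    ?_, ?_, ?_⟩
  · conv_rhs => rw [f.as_sum_range_C_mul_X_pow]
    rw [derivative_sum]
    refine Finset.sum_congr rfl fun i _ => ?_
    have hi : (i : K) + 1 ≠ 0 := by exact_mod_cast i.succ_ne_zero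
    rw [derivative_C_mul_X_pow, Nat.cast_succ, div_mul_cancel₀ _ hi, Nat.add_sub_cancel]
  · refine natDegree_sum_le_of_forall_le _ _ fun i hi => ?_
    exact (natDegree_C_mul_X_pow_le _ _).trans (Finset.mem_range.1 hi)
  · simp [eval_finsetSum]

/-- The unnormalised derivative of the step polynomials: for large `n` its mass on `[0, 1]`
concentrates at `c`, and it vanishes to order `k` at `1`. -/
noncomputable def stepKernel (k n : ℕ) (c : ℝ) : ℝ[X] := (1 - X) ^ k * (1 - (X - C c) ^ 2) ^ n

lemma eval_stepKernel (k n : ℕ) (c x : ℝ) :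
    (stepKernel k n c).eval x = (1 - x) ^ k * (1 - (x - c) ^ 2) ^ n := by
  simp [stepKernel]

lemma natDegree_stepKernel_le (k n : ℕ) (c : ℝ) : (stepKernel k n c).natDegree ≤ 2 * n + k := by
  have h_lin : ((1 : ℝ[X]) - X).natDegree ≤ 1 := by compute_degree
  have h_quad : ((1 : ℝ[X]) - (X - C c) ^ 2).natDegree ≤ 2 := by compute_degree
  calc (stepKernel k n c).natDegree
      ≤ k * 1 + n * 2 := natDegree_mul_le_of_le (natDegree_pow_le_of_le k h_lin)
        (natDegree_pow_le_of_le n h_quad)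
    _ = 2 * n + k := by ring

variable {c η x : ℝ} (k n : ℕ)

lemma eval_stepKernel_pos (hc : c ∈ Icc 0 1) (hx : x ∈ Ioo 0 1) :
    0 < (stepKernel k n c).eval x := by
  have h_lin : 0 < 1 - x := sub_pos.2 hx.2
  have h_quad : 0 < 1 - (x - c) ^ 2 := by nlinarith [hc.1, hc.2, hx.1, hx.2]
  rw [eval_stepKernel]
  positivity

lemma eval_stepKernel_le (hc : c ∈ Icc 0 1) (hx : x ∈ Icc 0 1) (hη : 0 ≤ η) (hxc : η ≤ |x - c|) :
    (stepKernel k n c).eval x ≤ (1 - η ^ 2) ^ n := by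
  have h_quad : 0 ≤ 1 - (x - c) ^ 2 := by nlinarith [hc.1, hc.2, hx.1, hx.2]
  have h_sq : η ^ 2 ≤ (x - c) ^ 2 := by rw [← sq_abs (x - c)]; gcongr
  calc (stepKernel k n c).eval x = (1 - x) ^ k * (1 - (x - c) ^ 2) ^ n := eval_stepKernel k n c x
    _ ≤ 1 * (1 - (x - c) ^ 2) ^ n := by
      gcongr
      exact pow_le_one₀ (sub_nonneg.2 hx.2) (sub_le_self 1 hx.1)
    _ ≤ (1 - η ^ 2) ^ n := by rw [one_mul]; gcongr

lemma le_eval_stepKernel (hη : 0 < η) (hc₀ : 0 ≤ c - η) (hc₁ : c + η < 1)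
    (hx : x ∈ Icc (c - η / 2) (c + η / 2)) :
    (1 - (c + η)) ^ k * (1 - η ^ 2 / 4) ^ n ≤ (stepKernel k n c).eval x := by
  have h_lin : 0 ≤ 1 - (c + η) := by linarith
  have h_quad : 0 ≤ 1 - η ^ 2 / 4 := by nlinarith
  have h_sq : (x - c) ^ 2 ≤ η ^ 2 / 4 := by nlinarith [hx.1, hx.2]
  have hx_le : x ≤ c + η := by linarith [hx.2]
  rw [eval_stepKernel]
  gcongr
  exact pow_nonneg (h_lin.trans (by gcongr)) k

variable {k n} {G : ℝ[X]}

lemma strictMonoOn_of_derivative_eq_stepKernel (hc : c ∈ Icc 0 1)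
    (hG : derivative G = stepKernel k n c) : StrictMonoOn (fun x => G.eval x) (Icc 0 1) := by
  refine strictMonoOn_of_deriv_pos (convex_Icc 0 1) G.continuousOn fun x hx => ?_
  rw [interior_Icc] at hx
  rw [Polynomial.deriv, hG]
  exact eval_stepKernel_pos k n hc hx

lemma le_eval_one_of_derivative_eq_stepKernel (hη : 0 < η) (hc₀ : 0 ≤ c - η) (hc₁ : c + η < 1)
    (hG : derivative G = stepKernel k n c) (hG₀ : G.eval 0 = 0) :
    (1 - (c + η)) ^ k * (1 - η ^ 2 / 4) ^ n * η ≤ G.eval 1 := by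
  have h_mono := (strictMonoOn_of_derivative_eq_stepKernel (c := c)
    ⟨by linarith, by linarith⟩ hG).monotoneOn
  have h_left : G.eval 0 ≤ G.eval (c - η / 2) :=
    h_mono ⟨le_rfl, by linarith⟩ ⟨by linarith, by linarith⟩ (by linarith)
  have h_right : G.eval (c + η / 2) ≤ G.eval 1 :=
    h_mono ⟨by linarith, by linarith⟩ ⟨by linarith, le_rfl⟩ (by linarith)
  have h_mid := (convex_Icc (c - η / 2) (c + η / 2)).mul_sub_le_image_sub_of_le_deriv
    G.continuousOn G.differentiableOn
    (fun x hx => by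
      rw [Polynomial.deriv, hG]
      exact le_eval_stepKernel k n hη hc₀ hc₁ (interior_subset hx))
    (c - η / 2) ⟨le_rfl, by linarith⟩ (c + η / 2) ⟨by linarith, le_rfl⟩ (by linarith)
  rw [show c + η / 2 - (c - η / 2) = η by ring] at h_mid
  linarith

lemma eval_sub_le_of_derivative_eq_stepKernel (hη : 0 ≤ η) (hc : c ∈ Icc 0 1)
    (hG : derivative G = stepKernel k n c) {s t : ℝ} (hs : 0 ≤ s) (hst : s ≤ t) (ht : t ≤ 1)
    (h_off : ∀ x ∈ Icc s t, η ≤ |x - c|) :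
    G.eval t - G.eval s ≤ (1 - η ^ 2) ^ n * (t - s) := by
  refine (convex_Icc s t).image_sub_le_mul_sub_of_deriv_le G.continuousOn G.differentiableOn
    (fun x hx => ?_) s (left_mem_Icc.2 hst) t (right_mem_Icc.2 hst) hst
  have hx' : x ∈ Icc s t := interior_subset hx
  rw [Polynomial.deriv, hG]
  exact eval_stepKernel_le k n hc ⟨hs.trans hx'.1, hx'.2.trans ht⟩ hη (h_off x hx')

variable (k n) in
lemma exists_isRamp_eval_sub_le (hη : 0 < η) (hc₀ : 0 ≤ c - η) (hc₁ : c + η < 1) :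
    ∃ g : ℝ[X], g.natDegree ≤ 2 * n + k + 1 ∧ IsRamp (fun t => g.eval t) ∧
      (X - C 1) ^ k ∣ derivative g ∧
      ∀ s t, 0 ≤ s → s ≤ t → t ≤ 1 → (∀ x ∈ Icc s t, η ≤ |x - c|) →
        g.eval t - g.eval s ≤
          (1 - η ^ 2) ^ n / ((1 - (c + η)) ^ k * (1 - η ^ 2 / 4) ^ n * η) * (t - s) := by
  have hc : c ∈ Icc 0 1 := ⟨by linarith, by linarith⟩
  have h_num : 0 < 1 - η ^ 2 := by nlinarith
  have h_den : 0 < 1 - η ^ 2 / 4 := by nlinarith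
  have : 0 < 1 - (c + η) := sub_pos.2 hc₁
  obtain ⟨G, hG, hG_deg, hG₀⟩ := exists_derivative_eq (stepKernel k n c)
  have hG₁_le := le_eval_one_of_derivative_eq_stepKernel hη hc₀ hc₁ hG hG₀
  have hG₁ : 0 < G.eval 1 := lt_of_lt_of_le (by positivity) hG₁_le
  have h_eval : ∀ t, (C (G.eval 1)⁻¹ * G).eval t = G.eval t / G.eval 1 := by
    intro t; rw [eval_mul, eval_C, inv_mul_eq_div]
  refine ⟨C (G.eval 1)⁻¹ * G, ?_, ⟨?_, ?_, fun s hs t ht hst => ?_⟩, ?_,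
    fun s t hs hst ht h_off => ?_⟩
  · have := natDegree_stepKernel_le k n c
    exact (natDegree_C_mul_le _ _).trans (by lia)
  · rw [h_eval, hG₀, zero_div]
  · rw [h_eval, div_self hG₁.ne']
  · simp only [h_eval]
    have := strictMonoOn_of_derivative_eq_stepKernel hc hG hs ht hst
    gcongr
  · have h_dvd : X - C 1 ∣ (1 - X : ℝ[X]) := ⟨-1, by rw [C_1]; ring⟩
    rw [derivative_C_mul, hG]
    exact ((pow_dvd_pow_of_dvd h_dvd k).mul_right _).mul_left _
  · have : 0 ≤ t - s := sub_nonneg.2 hst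
    rw [h_eval, h_eval, ← sub_div, div_mul_eq_mul_div]
    gcongr
    exact eval_sub_le_of_derivative_eq_stepKernel hη.le hc hG hs hst ht h_off

/-- The numerator `1 - η²` of the rate bounds the kernel off `(c₁, c₂)`, the denominator
`1 - η² / 4` bounds it from below on the middle half of that interval. -/
lemma exists_isRamp_exponentially_steep (k : ℕ) {c₁ c₂ : ℝ} (hc₁ : 0 ≤ c₁) (hc : c₁ < c₂)
    (hc₂ : c₂ < 1) :
    ∃ K > (0 : ℝ), ∃ r ∈ Ioo (0 : ℝ) 1, ∀ n : ℕ, ∃ g : ℝ[X], g.natDegree ≤ 2 * n + k + 1 ∧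
      IsRamp (fun t => g.eval t) ∧ (X - C 1) ^ k ∣ derivative g ∧
      (∀ t ∈ Icc 0 c₁, g.eval t ≤ K * r ^ n * t) ∧
      ∀ t ∈ Icc c₂ 1, 1 - g.eval t ≤ K * r ^ n := by
  obtain ⟨c, η, rfl, rfl⟩ : ∃ c η, c₁ = c - η ∧ c₂ = c + η :=
    ⟨(c₁ + c₂) / 2, (c₂ - c₁) / 2, by ring, by ring⟩
  have hη : 0 < η := by linarith
  have h_num : 0 < 1 - η ^ 2 := by nlinarith
  have h_den : 0 < 1 - η ^ 2 / 4 := by nlinarith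
  have h_lin : 0 < 1 - (c + η) := sub_pos.2 hc₂
  refine ⟨1 / ((1 - (c + η)) ^ k * η), by positivity, (1 - η ^ 2) / (1 - η ^ 2 / 4),
    ⟨by positivity, (div_lt_one h_den).2 (by nlinarith)⟩, fun n => ?_⟩
  obtain ⟨g, hg_deg, hg, hg_dvd, hg_sub⟩ := exists_isRamp_eval_sub_le k n hη hc₁ hc₂
  rw [show (1 - η ^ 2) ^ n / ((1 - (c + η)) ^ k * (1 - η ^ 2 / 4) ^ n * η) =
    1 / ((1 - (c + η)) ^ k * η) * ((1 - η ^ 2) / (1 - η ^ 2 / 4)) ^ n by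
      rw [div_pow]; field_simp] at hg_sub
  have hg₀ : g.eval 0 = 0 := hg.map_zero
  have hg₁ : g.eval 1 = 1 := hg.map_one
  refine ⟨g, hg_deg, hg, hg_dvd, fun t ht => ?_, fun t ht => ?_⟩
  · have h_rise := hg_sub 0 t le_rfl ht.1 (by linarith [ht.2]) fun x hx => by
      rw [abs_sub_comm]
      exact (by linarith [hx.2, ht.2] : η ≤ c - x).trans (le_abs_self _)
    rwa [hg₀, sub_zero, sub_zero] at h_rise
  · have h_rise := hg_sub t 1 (by linarith [ht.1]) ht.2 le_rfl fun x hx =>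
      (by linarith [hx.1, ht.1] : η ≤ x - c).trans (le_abs_self _)
    rw [hg₁] at h_rise
    exact h_rise.trans (mul_le_of_le_one_right (by positivity) (by linarith [ht.1]))

end Step

section Peak

/-- A function on `[L, R]` with values in `[0, 1]` that attains `1` only at `x₀`, and that is
strictly increasing on `[a, x₀]` and strictly decreasing on `[x₀, b]`: the shape shared by the
required polynomial and by the inner polynomial of the composition. -/
structure IsPeak {α : Type*} [Preorder α] (f : α → ℝ) (L a x₀ b R : α) : Prop where
  eq_one : f x₀ = 1
  nonneg : ∀ x ∈ Icc L R, 0 ≤ f x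
  lt_one : ∀ x ∈ Icc L R, x ≠ x₀ → f x < 1
  strictMonoOn : StrictMonoOn f (Icc a x₀)
  strictAntiOn : StrictAntiOn f (Icc x₀ b)

variable {α : Type*}

lemma IsPeak.mapsTo [Preorder α] {f : α → ℝ} {L a x₀ b R : α} (hf : IsPeak f L a x₀ b R) :
    MapsTo f (Icc L R) (Icc 0 1) := by
  intro x hx
  refine ⟨hf.nonneg x hx, ?_⟩
  rcases eq_or_ne x x₀ with rfl | hne
  · exact hf.eq_one.le
  · exact (hf.lt_one x hx hne).le

lemma IsRamp.comp_isPeak [Preorder α] {g : ℝ → ℝ} {f : α → ℝ} {L a x₀ b R : α} (hg : IsRamp g)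
    (hf : IsPeak f L a x₀ b R) (hLa : L ≤ a) (hx₀ : x₀ ∈ Icc a b) (hbR : b ≤ R) :
    IsPeak (fun x => g (f x)) L a x₀ b R where
  eq_one := by rw [hf.eq_one, hg.map_one]
  nonneg x hx := (hg.mapsTo (hf.mapsTo hx)).1
  lt_one x hx hne := by
    rw [← hg.map_one]
    exact hg.strictMonoOn (hf.mapsTo hx) (right_mem_Icc.2 zero_le_one) (hf.lt_one x hx hne)
  strictMonoOn := hg.strictMonoOn.comp hf.strictMonoOn <|
    hf.mapsTo.mono_left <| Icc_subset_Icc hLa (hx₀.2.trans hbR)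
  strictAntiOn := hg.strictMonoOn.comp_strictAntiOn hf.strictAntiOn <|
    hf.mapsTo.mono_left <| Icc_subset_Icc (hLa.trans hx₀.1) hbR

lemma isPeak_of_lt_one_of_strictMonoOn_of_strictAntiOn [LinearOrder α] {f : α → ℝ}
    {L a x₀ b R : α} (hx₀ : x₀ ∈ Icc a b) (h_one : f x₀ = 1) (h_nonneg : ∀ x ∈ Icc L R, 0 ≤ f x)
    (h_out : ∀ x ∈ Icc L a ∪ Icc b R, f x < 1) (h_mono : StrictMonoOn f (Icc a x₀))
    (h_anti : StrictAntiOn f (Icc x₀ b)) : IsPeak f L a x₀ b R := by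
  refine ⟨h_one, h_nonneg, fun x hx hne => ?_, h_mono, h_anti⟩
  rcases le_total x a with hxa | hax
  · exact h_out x (.inl ⟨hx.1, hxa⟩)
  rcases le_total b x with hbx | hxb
  · exact h_out x (.inr ⟨hbx, hx.2⟩)
  rw [← h_one]
  rcases hne.lt_or_gt with hlt | hgt
  · exact h_mono ⟨hax, hlt.le⟩ (right_mem_Icc.2 hx₀.1) hlt
  · exact h_anti (left_mem_Icc.2 hx₀.2) ⟨hgt.le, hxb⟩ hgt

/-- The witness is `Z² / Z(x₀)²` times a positive quadratic polynomial chosen to cancel the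
logarithmic derivative `v` of `Z²` at `x₀`; its leading coefficient `v² + 1` makes it definite. -/
lemma exists_sq_dvd_nonneg_derivative_eval_eq_zero {K : Type*} [Field K] [LinearOrder K]
    [IsStrictOrderedRing K] {Z : K[X]} {x₀ : K} (hZ : Z.eval x₀ ≠ 0) :
    ∃ V : K[X], Z ^ 2 ∣ V ∧ V.eval x₀ = 1 ∧ (derivative V).eval x₀ = 0 ∧ (∀ x, 0 ≤ V.eval x) ∧
      ∀ x, Z.eval x ≠ 0 → 0 < V.eval x := by
  obtain ⟨v, hv⟩ : ∃ v, v = (derivative (Z ^ 2)).eval x₀ / Z.eval x₀ ^ 2 := ⟨_, rfl⟩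
  obtain ⟨q, hq⟩ : ∃ q : K[X], q = 1 - C v * (X - C x₀) + C (v ^ 2 + 1) * (X - C x₀) ^ 2 :=
    ⟨_, rfl⟩
  have hq_pos : ∀ x, 0 < q.eval x := by
    intro x
    have h_eval : q.eval x = 1 - v * (x - x₀) + (v ^ 2 + 1) * (x - x₀) ^ 2 := by simp [hq]
    nlinarith [sq_nonneg (v * (x - x₀) - 1 / 2), sq_nonneg (x - x₀)]
  have hq_one : q.eval x₀ = 1 := by simp [hq]
  have hq_deriv : (derivative q).eval x₀ = -v := by simp [hq, derivative_pow]
  have hZ_deriv : (derivative (Z ^ 2)).eval x₀ = v * Z.eval x₀ ^ 2 := by rw [hv]; field_simp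
  have h_eval : ∀ x, (C (Z.eval x₀ ^ 2)⁻¹ * (Z ^ 2 * q)).eval x =
      (Z.eval x₀ ^ 2)⁻¹ * (Z.eval x ^ 2 * q.eval x) := by
    intro x; simp only [eval_mul, eval_C, eval_pow]
  refine ⟨C (Z.eval x₀ ^ 2)⁻¹ * (Z ^ 2 * q), (dvd_mul_right _ _).mul_left _, ?_, ?_,
    fun x => ?_, fun x hx => ?_⟩
  · rw [h_eval, hq_one, mul_one, inv_mul_cancel₀ (pow_ne_zero 2 hZ)]
  · rw [derivative_C_mul, derivative_mul]
    simp only [eval_mul, eval_add, eval_C, eval_pow, hZ_deriv, hq_one, hq_deriv]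
    ring
  · have := hq_pos x
    rw [h_eval]
    positivity
  · have := hq_pos x
    rw [h_eval]
    positivity

lemma exists_two_mul_pow_lt_pow {p q d : ℝ} (hp : 0 ≤ p) (hq : 0 ≤ q) (hpd : p < d) (hqd : q < d) :
    ∃ n : ℕ, 2 * p ^ (2 * n + 1) < d ^ (2 * n + 1) ∧ 2 * q ^ (2 * n + 1) < d ^ (2 * n + 1) := by
  have h_odd : Tendsto (fun n : ℕ => 2 * n + 1) atTop atTop :=
    tendsto_atTop_mono (fun n => show n ≤ 2 * n + 1 by lia) tendsto_id
  have h_lt := (eventually_mul_pow_lt_mul_pow 2 hp hpd one_pos).and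
    (eventually_mul_pow_lt_mul_pow 2 hq hqd one_pos)
  simpa only [one_mul] using (h_odd.eventually h_lt).exists

/-- The witness is `s (x - a) ^ (2n + 1) + t (x - b) ^ (2n + 1) + const`; the weights `s` and `t`
that balance it are positive once `n` is large. -/
lemma exists_derivative_pos_eval_eq_neg_eval {a x₀ b : ℝ} (hax : a < x₀) (hxb : x₀ < b) :
    ∃ h : ℝ[X], h.eval x₀ = 0 ∧ h.eval a = -h.eval b ∧ ∀ x, 0 < (derivative h).eval x := by
  have hab : a < b := hax.trans hxb
  obtain ⟨n, hn_left, hn_right⟩ := exists_two_mul_pow_lt_pow (sub_nonneg.2 hax.le)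
    (sub_nonneg.2 hxb.le) (sub_lt_sub_right hxb a) (sub_lt_sub_left hax b)
  obtain ⟨s, hs⟩ : ∃ s, s = (b - a) ^ (2 * n + 1) - 2 * (b - x₀) ^ (2 * n + 1) := ⟨_, rfl⟩
  obtain ⟨t, ht⟩ : ∃ t, t = (b - a) ^ (2 * n + 1) - 2 * (x₀ - a) ^ (2 * n + 1) := ⟨_, rfl⟩
  have hs₀ : 0 < s := hs ▸ sub_pos.2 hn_right
  have ht₀ : 0 < t := ht ▸ sub_pos.2 hn_left
  have h_neg : ∀ x y : ℝ, (x - y) ^ (2 * n + 1) = -(y - x) ^ (2 * n + 1) := fun x y => by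
    rw [← neg_sub, Odd.neg_pow (odd_two_mul_add_one n)]
  have h_even : Even (2 * n) := even_two_mul n
  let f : ℝ[X] := C s * (X - C a) ^ (2 * n + 1) + C t * (X - C b) ^ (2 * n + 1)
  have hf : ∀ x, f.eval x = s * (x - a) ^ (2 * n + 1) + t * (x - b) ^ (2 * n + 1) := by
    intro x; simp [f]
  have hf' : ∀ x, (derivative f).eval x =
      (2 * n + 1) * (s * (x - a) ^ (2 * n) + t * (x - b) ^ (2 * n)) := by
    intro x
    simp only [f, derivative_add, derivative_C_mul, derivative_X_sub_C_pow, eval_add, eval_mul,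
      eval_pow, eval_sub, eval_X, eval_C, Nat.add_sub_cancel]
    push_cast
    ring
  refine ⟨f - C (f.eval x₀), by simp, ?_, fun x => ?_⟩
  · simp only [eval_sub, eval_C, hf, sub_self, h_neg a b, h_neg x₀ b, hs, ht]
    ring
  · rw [derivative_sub, derivative_C, sub_zero, hf']
    rcases eq_or_ne x b with rfl | hx
    · have := pow_pos (sub_pos.2 hab) (2 * n)
      have := h_even.pow_nonneg (x - x)
      positivity
    · have := h_even.pow_pos (sub_ne_zero.2 hx)
      have := h_even.pow_nonneg (x - a)
      positivity

lemma exists_eq_X_sub_C_mul_of_derivative_pos {h : ℝ[X]} {x₀ : ℝ} (h₀ : h.eval x₀ = 0)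
    (h_pos : ∀ x, 0 < (derivative h).eval x) :
    ∃ H : ℝ[X], h = (X - C x₀) * H ∧ ∀ x, 0 < H.eval x := by
  have h_mono : StrictMono fun x => h.eval x :=
    strictMono_of_deriv_pos fun x => by rw [Polynomial.deriv]; exact h_pos x
  obtain ⟨H, hH⟩ := dvd_iff_isRoot.2 h₀
  refine ⟨H, hH, fun x => ?_⟩
  have h_eval : h.eval x = (x - x₀) * H.eval x := by simp [hH]
  rcases lt_trichotomy x x₀ with hlt | rfl | hgt
  · have h_val : h.eval x < h.eval x₀ := h_mono hlt
    rw [h₀, h_eval] at h_val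
    exact pos_of_mul_neg_right h_val (sub_neg.2 hlt).le
  · have h_der := h_pos x
    simpa [hH] using h_der
  · have h_val : h.eval x₀ < h.eval x := h_mono hgt
    rw [h₀, h_eval] at h_val
    exact (pos_iff_pos_of_mul_pos h_val).1 (sub_pos.2 hgt)

variable {a x₀ b : ℝ}

lemma strictMonoOn_and_strictAntiOn_of_derivative_eq {f W : ℝ[X]} (hx₀ : x₀ ∈ Icc a b)
    (hf : derivative f = -((X - C x₀) * W)) (hW : ∀ x ∈ Icc a b, 0 < W.eval x) :
    StrictMonoOn (fun x => f.eval x) (Icc a x₀) ∧ StrictAntiOn (fun x => f.eval x) (Icc x₀ b) := by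
  have h_eval : ∀ x, (derivative f).eval x = (x₀ - x) * W.eval x := by
    intro x
    simp only [hf, eval_neg, eval_mul, eval_sub, eval_X, eval_C]
    ring
  constructor
  · refine strictMonoOn_of_deriv_pos (convex_Icc a x₀) f.continuousOn fun x hx => ?_
    rw [interior_Icc] at hx
    rw [Polynomial.deriv, h_eval]
    exact mul_pos (sub_pos.2 hx.2) (hW x ⟨hx.1.le, hx.2.le.trans hx₀.2⟩)
  · refine strictAntiOn_of_deriv_neg (convex_Icc x₀ b) f.continuousOn fun x hx => ?_
    rw [interior_Icc] at hx
    rw [Polynomial.deriv, h_eval]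
    exact mul_neg_of_neg_of_pos (sub_neg.2 hx.1) (hW x ⟨hx₀.1.trans hx.1.le, hx.2.le⟩)

lemma eventually_strictMonoOn_and_strictAntiOn_mul_pow {u V w : ℝ[X]} (hx₀ : x₀ ∈ Icc a b)
    (hu : derivative u = -((X - C x₀) * w)) (hw : ∀ x ∈ Icc a b, 0 < w.eval x)
    (hu_pos : ∀ x ∈ Icc a b, 0 < u.eval x) (hV : (derivative V).eval x₀ = 0)
    (hV_pos : ∀ x ∈ Icc a b, 0 < V.eval x) :
    ∀ᶠ N : ℕ in atTop, StrictMonoOn (fun x => (V * u ^ N).eval x) (Icc a x₀) ∧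
      StrictAntiOn (fun x => (V * u ^ N).eval x) (Icc x₀ b) := by
  obtain ⟨P, hP⟩ := dvd_iff_isRoot.2 hV
  have hwV : ∀ x ∈ Icc a b, 0 < (w * V).eval x := fun x hx => by
    rw [eval_mul]; exact mul_pos (hw x hx) (hV_pos x hx)
  obtain ⟨B, hB⟩ := isCompact_Icc.exists_bound_of_continuousOn <|
    (P * u).continuousOn.div (w * V).continuousOn fun x hx => (hwV x hx).ne'
  filter_upwards [tendsto_natCast_atTop_atTop.eventually_gt_atTop B, eventually_ge_atTop 1]
    with N hN hN_one
  obtain ⟨n, rfl⟩ := Nat.exists_eq_add_of_le' hN_one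
  refine strictMonoOn_and_strictAntiOn_of_derivative_eq hx₀
    (W := u ^ n * (C ((n + 1 : ℕ) : ℝ) * (w * V) - P * u)) ?_ fun x hx => ?_
  · rw [derivative_mul, derivative_pow_succ, hP, hu]
    push_cast
    ring
  · have h_ratio : (P * u).eval x / (w * V).eval x < (n + 1 : ℕ) :=
      ((le_abs_self _).trans (hB x hx)).trans_lt hN
    rw [div_lt_iff₀ (hwV x hx)] at h_ratio
    rw [eval_mul, eval_pow, eval_sub, eval_mul (p := C _), eval_C]
    exact mul_pos (pow_pos (hu_pos x hx) n) (sub_pos.2 h_ratio)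

lemma exists_pos_mul_sq_lt_one {s : Set ℝ} (hs : IsCompact s) {f : ℝ → ℝ} (hf : ContinuousOn f s) :
    ∃ ε > (0 : ℝ), ∀ x ∈ s, ε * f x ^ 2 < 1 := by
  obtain ⟨B, hB⟩ := hs.exists_bound_of_continuousOn (hf.pow 2)
  refine ⟨(|B| + 1)⁻¹, by positivity, fun x hx => ?_⟩
  rw [inv_mul_lt_iff₀ (by positivity), mul_one]
  exact ((le_abs_self _).trans ((hB x hx).trans (le_abs_self B))).trans_lt (lt_add_one |B|)

/-- The witness is `1 - ε h²` with `h` increasing, `h x₀ = 0` and `h a = -h b`; the last equation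
makes the values at `a` and `b` agree, so that every value outside `(a, b)` is below every value
inside. -/
lemma exists_bump {L R : ℝ} (hax : a < x₀) (hxb : x₀ < b) :
    ∃ u w : ℝ[X], u.eval x₀ = 1 ∧ derivative u = -((X - C x₀) * w) ∧ (∀ x, 0 < w.eval x) ∧
      (∀ x ∈ Icc L R, 0 < u.eval x) ∧
      ∀ x ∈ Iic a ∪ Ici b, ∀ y ∈ Ioo a b, u.eval x < u.eval y := by
  obtain ⟨h, hx₀, h_bal, h_der⟩ := exists_derivative_pos_eval_eq_neg_eval hax hxb
  have h_mono : StrictMono fun x => h.eval x :=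
    strictMono_of_deriv_pos fun x => by rw [Polynomial.deriv]; exact h_der x
  obtain ⟨H, hH, hH_pos⟩ := exists_eq_X_sub_C_mul_of_derivative_pos hx₀ h_der
  obtain ⟨ε, hε, hε_lt⟩ := exists_pos_mul_sq_lt_one (isCompact_Icc (a := L) (b := R)) h.continuousOn
  have h_eval : ∀ x, (1 - C ε * h ^ 2).eval x = 1 - ε * h.eval x ^ 2 := by intro x; simp
  refine ⟨1 - C ε * h ^ 2, C (2 * ε) * (H * derivative h), ?_, ?_, fun x => ?_, fun x hx => ?_,
    fun x hx y hy => ?_⟩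
  · simp [hx₀]
  · rw [derivative_sub, derivative_one, derivative_C_mul, derivative_sq, C_mul]
    linear_combination (-(C ε * C 2 * derivative h)) * hH
  · rw [eval_mul, eval_mul, eval_C]
    exact mul_pos (by positivity) (mul_pos (hH_pos x) (h_der x))
  · rw [h_eval]
    exact sub_pos.2 (hε_lt x hx)
  · have hy_abs : |h.eval y| < h.eval b := abs_lt.2 ⟨h_bal ▸ h_mono hy.1, h_mono hy.2⟩
    have hx_abs : h.eval b ≤ |h.eval x| := by
      rcases hx with hxa | hbx
      · have h_left : h.eval x ≤ h.eval a := h_mono.monotone hxa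
        rw [h_bal] at h_left
        exact le_abs.2 (.inr (le_neg_of_le_neg h_left))
      · exact le_abs.2 (.inl (h_mono.monotone hbx))
    rw [h_eval, h_eval]
    gcongr 1 - ε * ?_
    exact sq_lt_sq.2 (hy_abs.trans_le hx_abs)

lemma exists_isPeak_separating_levels {Z : ℝ[X]} {L a' R b' : ℝ} (hL : L ≤ a') (ha' : a' < a)
    (hax : a < x₀) (hxb : x₀ < b) (hb' : b < b') (hR : b' ≤ R)
    (hZ : ∀ x ∈ Icc a' b', Z.eval x ≠ 0) :
    ∃ S : ℝ[X], Z ^ 2 ∣ S ∧ IsPeak (fun x => S.eval x) L a' x₀ b' R ∧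
      ∃ c₁ c₂ : ℝ, 0 ≤ c₁ ∧ c₁ < c₂ ∧ c₂ < 1 ∧
        (∀ x ∈ Icc L a' ∪ Icc b' R, S.eval x ≤ c₁) ∧ ∀ x ∈ Icc a b, c₂ ≤ S.eval x := by
  have hx₀ : x₀ ∈ Icc a' b' := ⟨(ha'.trans hax).le, (hxb.trans hb').le⟩
  have ha_lt : ∀ {y}, y ∈ Icc a b → y ∈ Ioo a' b' := fun hy =>
    ⟨ha'.trans_le hy.1, hy.2.trans_lt hb'⟩
  have h_sub : Icc a' b' ⊆ Icc L R := Icc_subset_Icc hL hR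
  have h_out : Icc L a' ∪ Icc b' R ⊆ Iic a' ∪ Ici b' :=
    union_subset_union Icc_subset_Iic_self Icc_subset_Ici_self
  have h_out_sub : Icc L a' ∪ Icc b' R ⊆ Icc L R :=
    union_subset (Icc_subset_Icc_right (by linarith)) (Icc_subset_Icc_left (by linarith))
  obtain ⟨V, hZV, hV_one, hV_der, hV_nonneg, hV_pos⟩ :=
    exists_sq_dvd_nonneg_derivative_eval_eq_zero (hZ x₀ hx₀)
  obtain ⟨u, w, hu_one, hu_der, hw_pos, hu_pos, hu_lt⟩ :=
    exists_bump (L := L) (R := R) (ha'.trans hax) (hxb.trans hb')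
  have h_unimodal := eventually_strictMonoOn_and_strictAntiOn_mul_pow hx₀ hu_der
    (fun x _ => hw_pos x) (fun x hx => hu_pos x (h_sub hx)) hV_der
    (fun x hx => hV_pos x (hZ x hx))
  have h_levels := eventually_exists_separating_levels
    (isCompact_Icc.union isCompact_Icc) ⟨a', .inl ⟨hL, le_rfl⟩⟩
    isCompact_Icc ⟨x₀, hax.le, hxb.le⟩ V.continuous u.continuous
    (fun x _ => hV_nonneg x) (fun y hy => hV_pos y (hZ y (Ioo_subset_Icc_self (ha_lt hy))))
    (fun x hx => (hu_pos x (h_out_sub hx)).le) (fun x hx y hy => hu_lt x (h_out hx) y (ha_lt hy))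
  obtain ⟨N, ⟨h_mono, h_anti⟩, c₁, c₂, hc₁, hc, h_le, h_ge⟩ := (h_unimodal.and h_levels).exists
  have h_eval : ∀ x, (V * u ^ N).eval x = V.eval x * u.eval x ^ N := by intro x; simp
  have h_nonneg : ∀ x ∈ Icc L R, 0 ≤ (V * u ^ N).eval x := fun x hx => by
    rw [h_eval]; exact mul_nonneg (hV_nonneg x) (pow_nonneg (hu_pos x hx).le N)
  have h_one : (V * u ^ N).eval x₀ = 1 := by rw [h_eval, hV_one, hu_one, one_pow, one_mul]
  simp only [← h_eval] at h_le h_ge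
  have hc₂ : c₂ < 1 := by
    rw [← h_one]
    exact (h_ge a ⟨le_rfl, (hax.trans hxb).le⟩).trans_lt
      (h_mono ⟨ha'.le, hax.le⟩ ⟨hx₀.1, le_rfl⟩ hax)
  exact ⟨V * u ^ N, hZV.mul_right _, isPeak_of_lt_one_of_strictMonoOn_of_strictAntiOn hx₀ h_one
    h_nonneg (fun x hx => (h_le x hx).trans_lt (hc.trans hc₂)) h_mono h_anti, c₁, c₂, hc₁, hc, hc₂,
    h_le, h_ge⟩

end Peak

theorem exists_isPeak_exponential_decay {Z : ℝ[X]} (k : ℕ) {L a' a x₀ b b' R : ℝ} (hL : L ≤ a')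
    (ha' : a' < a) (hax : a < x₀) (hxb : x₀ < b) (hb' : b < b') (hR : b' ≤ R)
    (hZ : ∀ x ∈ Icc a' b', Z.eval x ≠ 0) :
    ∃ δ > (0 : ℝ), ∀ᶠ m : ℕ in atTop, ∃ Q : ℝ[X], Q.natDegree ≤ m ∧
      IsPeak (fun x => Q.eval x) L a' x₀ b' R ∧ (X - C x₀) ^ k ∣ derivative Q ∧ Z ^ 2 ∣ Q ∧
      (∀ x ∈ Icc a b, |Q.eval x - 1| ≤ Real.exp (-(δ * m))) ∧
      ∀ x ∈ Icc L a' ∪ Icc b' R, |Q.eval x| ≤ min 1 |Z.eval x| * Real.exp (-(δ * m)) := by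
  obtain ⟨S, hZS, hS, c₁, c₂, hc₁, hc, hc₂, hS_out, hS_in⟩ :=
    exists_isPeak_separating_levels hL ha' hax hxb hb' hR hZ
  obtain ⟨K, hK, r, ⟨hr₀, hr₁⟩, h_ramp⟩ := exists_isRamp_exponentially_steep k hc₁ hc hc₂
  obtain ⟨B, hB, hS_le⟩ := exists_abs_eval_le_mul_min_of_dvd isCompact_Icc
    ((dvd_pow_self Z two_ne_zero).trans hZS) fun x hx =>
      abs_le.2 ⟨neg_one_lt_zero.le.trans (hS.mapsTo hx).1, (hS.mapsTo hx).2⟩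
  obtain ⟨d, hd⟩ : ∃ d, d = S.natDegree + 1 := ⟨_, rfl⟩
  obtain ⟨δ, hδ, h_exp⟩ := exists_eventually_mul_pow_div_le_exp (K * B) hr₀ hr₁
    (d := 4 * d) (by lia)
  refine ⟨δ, hδ, ?_⟩
  filter_upwards [h_exp, eventually_ge_atTop (2 * d * (k + 1))] with m hm_exp hm
  obtain ⟨g, hg_deg, hg, hg_dvd, hg_low, hg_high⟩ := h_ramp (m / (4 * d))
  have hK_exp : K * r ^ (m / (4 * d)) ≤ Real.exp (-(δ * m)) := by
    refine le_trans ?_ hm_exp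
    gcongr
    exact le_mul_of_one_le_right hK.le hB
  have h_inside : Icc a b ⊆ Icc L R := Icc_subset_Icc (hL.trans ha'.le) (hb'.le.trans hR)
  have h_outside : Icc L a' ∪ Icc b' R ⊆ Icc L R :=
    union_subset (Icc_subset_Icc_right (by linarith)) (Icc_subset_Icc_left (by linarith))
  refine ⟨g.comp S, ?_, ?_, pow_dvd_derivative_comp hg_dvd hS.eq_one,
    hZS.trans (dvd_comp_of_eval_zero_eq_zero hg.map_zero S), fun x hx => ?_, fun x hx => ?_⟩
  · have h_deg := Nat.mul_div_le m (4 * d)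
    calc (g.comp S).natDegree ≤ g.natDegree * S.natDegree := natDegree_comp_le
      _ ≤ (2 * (m / (4 * d)) + k + 1) * d := Nat.mul_le_mul hg_deg (by lia)
      _ ≤ m := by nlinarith
  · simpa only [eval_comp] using hg.comp_isPeak hS hL
      ⟨(ha'.trans hax).le, (hxb.trans hb').le⟩ hR
  · have hSx := hS.mapsTo (h_inside hx)
    rw [eval_comp, abs_sub_comm, abs_of_nonneg (sub_nonneg.2 (hg.mapsTo hSx).2)]
    exact (hg_high _ ⟨hS_in x hx, hSx.2⟩).trans hK_exp
  · have hSx := hS.mapsTo (h_outside hx)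
    rw [eval_comp, abs_of_nonneg (hg.mapsTo hSx).1]
    calc g.eval (S.eval x)
        ≤ K * r ^ (m / (4 * d)) * S.eval x := hg_low _ ⟨hSx.1, hS_out x hx⟩
      _ ≤ K * r ^ (m / (4 * d)) * (B * min 1 |Z.eval x|) := by
        gcongr
        exact (le_abs_self _).trans (hS_le x (h_outside hx))
      _ = min 1 |Z.eval x| * (K * B * r ^ (m / (4 * d))) := by ring
      _ ≤ min 1 |Z.eval x| * Real.exp (-(δ * m)) := by gcongr

lemma eval_prod_X_sub_C_pow_ne_zero {ι R : Type*} [CommRing R] [IsDomain R] {s : Finset ι}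
    {a : ι → R} (k : ι → ℕ) {x : R} (hx : ∀ j ∈ s, a j ≠ x) :
    (∏ j ∈ s, (X - C (a j)) ^ k j).eval x ≠ 0 := by
  rw [eval_prod, Finset.prod_ne_zero_iff]
  intro j hj
  simpa using pow_ne_zero (k j) (sub_ne_zero.2 (hx j hj).symm)

/-- fast decreasing algebraic polynomials with prescribed zeros. -/
theorem stmt_0 (l l₀ : ℕ) (hl₀ : 1 ≤ l₀) (hl : l₀ + 1 ≤ l)
    (a : ℕ → ℝ) (a' A x₀ b b' : ℝ)
    (hmono : ∀ i j : ℕ, i < j → j ≤ l + 1 → a i < a j)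
    (h1 : a l₀ < a') (h2 : a' < A) (h3 : A < x₀) (h4 : x₀ < b) (h5 : b < b')
    (h6 : b' < a (l₀ + 1))
    (k : ℕ → ℕ) (hk : ∀ j ≤ l, 0 < k j) :
    ∃ δ₁ > (0 : ℝ), ∃ M : ℕ, ∀ m : ℕ, M ≤ m →
      ∃ Q : Polynomial ℝ, Q.natDegree ≤ m ∧
        Q.eval x₀ = 1 ∧
        (∀ j : ℕ, 1 ≤ j → j ≤ k 0 → iteratedDeriv j (fun x => Q.eval x) x₀ = 0) ∧
        (∀ x ∈ Set.Icc (a 0) (a (l + 1)), x ≠ x₀ → |Q.eval x| < 1) ∧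
        (∀ x ∈ Set.Icc A b, |Q.eval x - 1| ≤ Real.exp (-(δ₁ * m))) ∧
        (∀ x ∈ Set.Icc (a 0) a' ∪ Set.Icc b' (a (l + 1)),
          |Q.eval x| ≤
            min 1 (|∏ j ∈ Finset.Icc 1 l, (x - a j) ^ k j|) * Real.exp (-(δ₁ * m))) ∧
        (StrictMonoOn (fun x => Q.eval x) (Set.Icc a' A) ∨
          StrictAntiOn (fun x => Q.eval x) (Set.Icc a' A)) ∧
        (StrictMonoOn (fun x => Q.eval x) (Set.Icc b b') ∨
          StrictAntiOn (fun x => Q.eval x) (Set.Icc b b')) ∧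
        (∀ j : ℕ, 1 ≤ j → j ≤ l → ∀ κ ≤ k j,
          iteratedDeriv κ (fun x => Q.eval x) (a j) = 0) ∧
        (∀ x ∈ Set.Icc (a 0) (a (l + 1)), 0 ≤ Q.eval x) := by
  have ha : StrictMonoOn a (Iic (l + 1)) := fun i _ j hj hij => hmono i j hij hj
  have h_left : ∀ j ≤ l₀, a j < a' := fun j hj =>
    (ha.monotoneOn (show j ≤ l + 1 by lia) (show l₀ ≤ l + 1 by lia) hj).trans_lt h1
  have h_right : ∀ j ≤ l + 1, l₀ < j → b' < a j := fun j hjl hj =>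
    h6.trans_le (ha.monotoneOn (show l₀ + 1 ≤ l + 1 by lia) hjl hj)
  have hZ : ∀ x ∈ Icc a' b', (∏ j ∈ Finset.Icc 1 l, (X - C (a j)) ^ k j).eval x ≠ 0 :=
    fun x hx => eval_prod_X_sub_C_pow_ne_zero k fun j hj => (le_or_gt j l₀).elim
      (fun h => ((h_left j h).trans_le hx.1).ne)
      (fun h => (hx.2.trans_lt (h_right j (by grind) h)).ne')
  obtain ⟨δ, hδ, h_ev⟩ := exists_isPeak_exponential_decay (k 0) (h_left 0 l₀.zero_le).le
    h2 h3 h4 h5 (h_right (l + 1) le_rfl (by lia)).le hZ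
  obtain ⟨M, hM⟩ := eventually_atTop.1 h_ev
  refine ⟨δ, hδ, M, fun m hm => ?_⟩
  obtain ⟨Q, hQ_deg, hQ, hQ_flat, hQ_dvd, hQ_in, hQ_out⟩ := hM m hm
  refine ⟨Q, hQ_deg, hQ.eq_one, fun _ => iteratedDeriv_eval_eq_zero_of_pow_dvd_derivative hQ_flat,
    fun x hx hne => ?_, hQ_in, by simpa [eval_prod] using hQ_out,
    .inl (hQ.strictMonoOn.mono (Icc_subset_Icc_right h3.le)),
    .inr (hQ.strictAntiOn.mono (Icc_subset_Icc_left h4.le)), fun j hj hjl κ hκ => ?_, hQ.nonneg⟩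
  · exact (abs_of_nonneg (hQ.nonneg x hx)).trans_lt (hQ.lt_one x hx hne)
  · have h_dvd := Finset.dvd_prod_of_mem (fun j => (X - C (a j)) ^ k j) (Finset.mem_Icc.2 ⟨hj, hjl⟩)
    exact iteratedDeriv_eval_eq_zero_of_pow_dvd (n := k j * 2)
      (pow_mul (X - C (a j)) _ 2 ▸ (pow_dvd_pow_of_dvd h_dvd 2).trans hQ_dvd)
      (by have := hk j hjl; lia)
end

section
/- Let t_0, α, β, α', β' ∈ (−π, π) with −π < α' < α < t_0 < β < β' < π, let α_1, …, α_l ∈ (−π, π) \ [α', β'] be points with corresponding positive integer powers k_1, …, k_l, and set Z(t) := ∏_{j=1}^l |sin((t − α_j)/2)|^{k_j}. Then there exists δ_1 > 0 such that for all sufficiently large m there exists a real trigonometric polynomial Q_m of degree at most m satisfying: (i) Q_m(t_0) = 1; (ii) 0 ≤ Q_m(t) < 1 for all t ∈ [−π, π) with t ≠ t_0; (iii) Q_m^{(κ)}(α_j) = 0 for j = 1, …, l and κ = 0, 1, …, k_j; (iv) Q_m(t) ≤ min(1, |Z(t)|)·exp(−δ_1 m) for t ∈ [−π, π] \ (α',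 β'); (v) |Q_m(t) − 1| ≤ exp(−δ_1 m) for t ∈ [α, β]; (vi) Q_m is strictly monotone on [α', α] and on [β, β']. -/
open scoped Real

/-- A real trigonometric polynomial of degree at most `n`. -/
def IsTrigPoly (n : ℕ) (T : ℝ → ℝ) : Prop :=
  ∃ A B : ℕ → ℝ,
    T = fun t => ∑ j ∈ Finset.range (n + 1),
      (A j * Real.cos (j * t) + B j * Real.sin (j * t))

/-!
The construction composes polynomials with a trigonometric peak `v`, which rises from `0` at `-π` to
`1` at `t₀` and falls back to `0` at `π`, and is balanced: `v α' = v β'`. Such a `v` is a primitive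
of `K φ`, where `φ t = sin ((t₀ - t) / 2) cos (t / 2)` changes sign only at `t₀` and the positive
trigonometric polynomial `K` makes the integrals of `K φ` over the period and over `[α', β']`
vanish; `K` exists because the pair of moments to be killed ranges over a convex cone meeting all
four open quadrants of the plane.

Put `ρ = v α'`. All `v (α_j)` are smaller than `ρ`, so `W = ∏ (x - v (α_j)) ^ (2 k_j)` is
nonnegative and increasing on `[ρ, 1]`, and the normalization `G` of `x ^ n W` is, for large `n`,
smaller on `[0, ρ]` than at `min (v α) (v β)`. Composing `G` with a polynomial step of degree `O(N)`
from `0` to `1` between these two levels makes both errors geometrically small in `N`, keeps the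
monotonicity, and keeps the factor `W`. That factor becomes the required zeros after composing with
`v`, and bounds the result by a multiple of `Z` since `|v t - v s| ≤ C |sin ((t - s) / 2)|`.
-/

open Set Filter MeasureTheory Polynomial Topology

lemma abs_sin_nat_mul_le (k : ℕ) (x : ℝ) : |Real.sin (k * x)| ≤ k * |Real.sin x| := by
  induction k with
  | zero => simp
  | succ k ih =>
    rw [Nat.cast_succ, add_one_mul, Real.sin_add]
    calc |Real.sin (k * x) * Real.cos x + Real.cos (k * x) * Real.sin x|
        ≤ |Real.sin (k * x)| * |Real.cos x| + |Real.cos (k * x)| * |Real.sin x| := by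
          rw [← abs_mul, ← abs_mul]; exact abs_add_le _ _
      _ ≤ k * |Real.sin x| * 1 + 1 * |Real.sin x| := by
          gcongr
          exacts [Real.abs_cos_le_one _, Real.abs_cos_le_one _]
      _ = (k + 1) * |Real.sin x| := by ring

namespace IsTrigPoly

section Algebra

variable {m n : ℕ} {S T : ℝ → ℝ}

protected lemma add (hT : IsTrigPoly n T) (hS : IsTrigPoly n S) :
    IsTrigPoly n fun t ↦ T t + S t := by
  obtain ⟨A, B, rfl⟩ := hT
  obtain ⟨A', B', rfl⟩ := hS
  refine ⟨A + A', B + B', funext fun t ↦ ?_⟩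
  rw [← Finset.sum_add_distrib]
  exact Finset.sum_congr rfl fun j _ ↦ by simp only [Pi.add_apply]; ring

protected lemma const_mul (c : ℝ) (hT : IsTrigPoly n T) : IsTrigPoly n fun t ↦ c * T t := by
  obtain ⟨A, B, rfl⟩ := hT
  refine ⟨c • A, c • B, funext fun t ↦ ?_⟩
  rw [Finset.mul_sum]
  exact Finset.sum_congr rfl fun j _ ↦ by simp only [Pi.smul_apply, smul_eq_mul]; ring

lemma cos_nat_mul {j : ℕ} (hj : j ≤ n) : IsTrigPoly n fun t ↦ Real.cos (j * t) :=
  ⟨Pi.single j 1, 0, by simp [Pi.single_apply, Nat.lt_succ_of_le hj]⟩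

lemma sin_nat_mul {j : ℕ} (hj : j ≤ n) : IsTrigPoly n fun t ↦ Real.sin (j * t) :=
  ⟨0, Pi.single j 1, by simp [Pi.single_apply, Nat.lt_succ_of_le hj]⟩

lemma cos_int_mul {j : ℤ} (hj : j.natAbs ≤ n) : IsTrigPoly n fun t ↦ Real.cos (j * t) := by
  convert cos_nat_mul hj using 2 with t
  obtain h | h := Int.natAbs_eq j <;> rw [h] <;> simp

lemma sin_int_mul {j : ℤ} (hj : j.natAbs ≤ n) : IsTrigPoly n fun t ↦ Real.sin (j * t) := by
  obtain h | h := Int.natAbs_eq j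
  · convert sin_nat_mul hj using 2 with t
    rw [h]; simp
  · convert (sin_nat_mul hj).const_mul (-1) using 2 with t
    rw [h]; simp

protected lemma const (n : ℕ) (c : ℝ) : IsTrigPoly n fun _ ↦ c := by
  simpa using (cos_nat_mul n.zero_le).const_mul c

protected lemma sum {ι : Type*} {s : Finset ι} {f : ι → ℝ → ℝ}
    (hf : ∀ i ∈ s, IsTrigPoly n (f i)) : IsTrigPoly n fun t ↦ ∑ i ∈ s, f i t := by
  classical
  induction s using Finset.induction_on with
  | empty => simpa using IsTrigPoly.const n 0
  | insert a s ha ih =>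
    simp only [Finset.sum_insert ha]
    exact (hf a (s.mem_insert_self a)).add (ih fun i hi ↦ hf i (Finset.mem_insert_of_mem hi))

protected lemma mono (hmn : m ≤ n) (hT : IsTrigPoly m T) : IsTrigPoly n T := by
  obtain ⟨A, B, rfl⟩ := hT
  refine IsTrigPoly.sum fun j hj ↦ ?_
  have hjn : j ≤ n := (Finset.mem_range_succ_iff.1 hj).trans hmn
  exact ((cos_nat_mul hjn).const_mul _).add ((sin_nat_mul hjn).const_mul _)

protected lemma mul (hT : IsTrigPoly m T) (hS : IsTrigPoly n S) :
    IsTrigPoly (m + n) fun t ↦ T t * S t := by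
  obtain ⟨A, B, rfl⟩ := hT
  obtain ⟨A', B', rfl⟩ := hS
  simp only [Finset.sum_mul_sum]
  refine IsTrigPoly.sum fun j hj ↦ IsTrigPoly.sum fun i hi ↦ ?_
  rw [Finset.mem_range] at hj hi
  have hadd : ((j : ℤ) + i).natAbs ≤ m + n := by lia
  have hsub : ((j : ℤ) - i).natAbs ≤ m + n := by lia
  convert (((cos_int_mul hadd).const_mul ((A j * A' i - B j * B' i) / 2)).add
    ((cos_int_mul hsub).const_mul ((A j * A' i + B j * B' i) / 2))).add
    (((sin_int_mul hadd).const_mul ((A j * B' i + B j * A' i) / 2)).add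
    ((sin_int_mul hsub).const_mul ((B j * A' i - A j * B' i) / 2))) using 2 with t
  push_cast
  rw [add_mul (j : ℝ), sub_mul (j : ℝ), Real.cos_add, Real.cos_sub, Real.sin_add, Real.sin_sub]
  ring

protected lemma pow (hT : IsTrigPoly n T) (k : ℕ) : IsTrigPoly (k * n) fun t ↦ T t ^ k := by
  induction k with
  | zero => simpa using IsTrigPoly.const 0 1
  | succ k ih => simpa only [pow_succ, Nat.succ_mul] using ih.mul hT

protected lemma polynomial_eval (hT : IsTrigPoly n T) {P : ℝ[X]} {D : ℕ} (hP : P.natDegree ≤ D) :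
    IsTrigPoly (D * n) fun t ↦ P.eval (T t) := by
  simp only [eval_eq_sum_range' (Nat.lt_succ_of_le hP)]
  refine IsTrigPoly.sum fun i hi ↦ ((hT.pow i).mono ?_).const_mul _
  exact Nat.mul_le_mul_right _ (Finset.mem_range_succ_iff.1 hi)

end Algebra

section Analysis

variable {n : ℕ} {T : ℝ → ℝ}

protected lemma analyticAt (hT : IsTrigPoly n T) (t : ℝ) : AnalyticAt ℝ T t := by
  obtain ⟨A, B, rfl⟩ := hT
  fun_prop

protected lemma continuous (hT : IsTrigPoly n T) : Continuous T := by
  obtain ⟨A, B, rfl⟩ := hT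
  fun_prop

lemma apply_neg_pi (hT : IsTrigPoly n T) : T (-π) = T π := by
  obtain ⟨A, B, rfl⟩ := hT
  simp [Real.sin_nat_mul_pi]

lemma exists_hasDerivAt_sub_const (hT : IsTrigPoly n T) :
    ∃ (V : ℝ → ℝ) (c : ℝ), IsTrigPoly n V ∧ ∀ t, HasDerivAt V (T t - c) t := by
  obtain ⟨A, B, rfl⟩ := hT
  refine ⟨_, A 0, ⟨fun j ↦ -(B j / j), fun j ↦ A j / j, rfl⟩, fun t ↦ ?_⟩
  have hterm (j : ℕ) : HasDerivAt
      (fun t : ℝ ↦ -(B j / j) * Real.cos (j * t) + A j / j * Real.sin (j * t))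
      (-(B j / j) * (-Real.sin (j * t) * j) + A j / j * (Real.cos (j * t) * j)) t := by
    have hmul : HasDerivAt (fun t : ℝ ↦ j * t) j t := by
      simpa using (hasDerivAt_id t).const_mul (j : ℝ)
    exact (hmul.cos.const_mul _).add (hmul.sin.const_mul _)
  refine (HasDerivAt.fun_sum fun j _ ↦ hterm j).congr_deriv ?_
  simp only [Finset.sum_range_succ', Nat.cast_zero, zero_mul, Real.cos_zero, Real.sin_zero,
    mul_zero, mul_one, add_zero, add_sub_cancel_right]
  refine Finset.sum_congr rfl fun j _ ↦ ?_
  have : ((j + 1 : ℕ) : ℝ) ≠ 0 := by positivity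
  field_simp
  ring

lemma exists_primitive (hT : IsTrigPoly n T) (hT₀ : ∫ t in -π..π, T t = 0) :
    ∃ V : ℝ → ℝ, IsTrigPoly n V ∧ ∀ t, HasDerivAt V (T t) t := by
  obtain ⟨V, c, hV, hderiv⟩ := hT.exists_hasDerivAt_sub_const
  have hint : ∫ t in -π..π, (T t - c) = V π - V (-π) :=
    intervalIntegral.integral_eq_sub_of_hasDerivAt (fun t _ ↦ hderiv t)
      ((hT.continuous.sub continuous_const).intervalIntegrable _ _)
  rw [intervalIntegral.integral_sub (hT.continuous.intervalIntegrable _ _)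
    intervalIntegrable_const, hT₀, hV.apply_neg_pi, sub_self,
    intervalIntegral.integral_const, smul_eq_mul] at hint
  have hc : c = 0 := by simpa [Real.pi_ne_zero] using hint
  exact ⟨V, hV, by simpa [hc] using hderiv⟩

lemma exists_abs_sub_le (hT : IsTrigPoly n T) :
    ∃ C, 0 ≤ C ∧ ∀ t s, |T t - T s| ≤ C * |Real.sin ((t - s) / 2)| := by
  obtain ⟨A, B, rfl⟩ := hT
  refine ⟨∑ j ∈ Finset.range (n + 1), 2 * j * (|A j| + |B j|), by positivity, fun t s ↦ ?_⟩
  rw [← Finset.sum_sub_distrib, Finset.sum_mul]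
  refine (Finset.abs_sum_le_sum_abs _ _).trans (Finset.sum_le_sum fun j _ ↦ ?_)
  have hsin : |Real.sin ((j * t - j * s) / 2)| ≤ j * |Real.sin ((t - s) / 2)| := by
    convert abs_sin_nat_mul_le j ((t - s) / 2) using 3
    ring
  have hcos_sub : |Real.cos (j * t) - Real.cos (j * s)| ≤ 2 * (j * |Real.sin ((t - s) / 2)|) := by
    rw [Real.cos_sub_cos, abs_mul, abs_mul, abs_neg, abs_two]
    nlinarith [Real.abs_sin_le_one ((j * t + j * s) / 2),
      abs_nonneg (Real.sin ((j * t - j * s) / 2))]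
  have hsin_sub : |Real.sin (j * t) - Real.sin (j * s)| ≤ 2 * (j * |Real.sin ((t - s) / 2)|) := by
    rw [Real.sin_sub_sin, abs_mul, abs_mul, abs_two]
    nlinarith [Real.abs_cos_le_one ((j * t + j * s) / 2),
      abs_nonneg (Real.sin ((j * t - j * s) / 2))]
  calc _ = |A j * (Real.cos (j * t) - Real.cos (j * s)) +
          B j * (Real.sin (j * t) - Real.sin (j * s))| := by ring_nf
    _ ≤ |A j| * (2 * (j * |Real.sin ((t - s) / 2)|)) +
          |B j| * (2 * (j * |Real.sin ((t - s) / 2)|)) := by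
      refine (abs_add_le _ _).trans ?_
      rw [abs_mul, abs_mul]
      gcongr
    _ = _ := by ring

lemma exists_prod_sub_pow_le {ι : Type*} (hT : IsTrigPoly n T) (J : Finset ι) (s : ι → ℝ)
    (k : ι → ℕ) :
    ∃ C, ∀ t, ∏ j ∈ J, (T t - T (s j)) ^ (2 * k j) ≤
      C * ∏ j ∈ J, |Real.sin ((t - s j) / 2)| ^ k j := by
  obtain ⟨C, hC, hle⟩ := hT.exists_abs_sub_le
  refine ⟨∏ j ∈ J, C ^ (2 * k j), fun t ↦ ?_⟩
  rw [← Finset.prod_mul_distrib]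
  refine Finset.prod_le_prod (fun j _ ↦ (even_two_mul _).pow_nonneg _) fun j _ ↦ ?_
  calc (T t - T (s j)) ^ (2 * k j) = |T t - T (s j)| ^ (2 * k j) := by rw [(even_two_mul _).pow_abs]
    _ ≤ (C * |Real.sin ((t - s j) / 2)|) ^ (2 * k j) := by gcongr; exact hle t (s j)
    _ = C ^ (2 * k j) * |Real.sin ((t - s j) / 2)| ^ (2 * k j) := mul_pow _ _ _
    _ ≤ C ^ (2 * k j) * |Real.sin ((t - s j) / 2)| ^ k j := by
      gcongr C ^ (2 * k j) * ?_
      exact pow_le_pow_of_le_one (abs_nonneg _) (Real.abs_sin_le_one _) (by lia)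

end Analysis

end IsTrigPoly

section MomentCone

variable {E : Type*} [NormedAddCommGroup E] [NormedSpace ℝ E] {g : ℝ → E}

/-- The moments `∫ K • g` over a period of the vector-valued weight `g`, taken over all strictly
positive trigonometric polynomials `K` of arbitrary degree. -/
def trigMomentCone (g : ℝ → E) (hg : IntegrableOn g (Icc (-π) π)) : ConvexCone ℝ E where
  carrier := {y | ∃ n K, IsTrigPoly n K ∧ (∀ t, 0 < K t) ∧ ∫ t in Icc (-π) π, K t • g t = y}
  smul_mem' := by
    rintro c hc _ ⟨n, K, hK, hpos, rfl⟩
    refine ⟨n, _, hK.const_mul c, fun t ↦ mul_pos hc (hpos t), ?_⟩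
    simp only [mul_smul, integral_smul]
  add_mem' := by
    rintro _ ⟨m, K, hK, hKpos, rfl⟩ _ ⟨n, L, hL, hLpos, rfl⟩
    refine ⟨max m n, _, (hK.mono (le_max_left m n)).add (hL.mono (le_max_right m n)),
      fun t ↦ add_pos (hKpos t) (hLpos t), ?_⟩
    simp only [add_smul]
    exact integral_add (hg.continuousOn_smul hK.continuous.continuousOn isCompact_Icc)
      (hg.continuousOn_smul hL.continuous.continuousOn isCompact_Icc)

lemma isTrigPoly_two_add_cos_sub (x : ℝ) : IsTrigPoly 1 fun t ↦ 2 + Real.cos (t - x) := by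
  convert (IsTrigPoly.const 1 2).add (((IsTrigPoly.cos_nat_mul le_rfl).const_mul (Real.cos x)).add
    ((IsTrigPoly.sin_nat_mul le_rfl).const_mul (Real.sin x))) using 2 with t
  rw [Real.cos_sub, Nat.cast_one, one_mul]
  ring

-- The kernels `(2 + cos (t - x)) ^ n`, normalized, concentrate at `x`.
lemma mem_closure_trigMomentCone [CompleteSpace E] (hg : IntegrableOn g (Icc (-π) π)) {x : ℝ}
    (hx : x ∈ Ioo (-π) π) (hgx : ContinuousAt g x) :
    g x ∈ closure (trigMomentCone g hg : Set E) := by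
  have hpos (t : ℝ) : 0 < 2 + Real.cos (t - x) := by linarith [Real.neg_one_le_cos (t - x)]
  have hmax : ∀ t ∈ Icc (-π) π, t ≠ x → 2 + Real.cos (t - x) < 2 + Real.cos (x - x) := by
    intro t ht htx
    have hne : Real.cos (t - x) ≠ 1 := by
      rw [Ne, Real.cos_eq_one_iff_of_lt_of_lt (by linarith [ht.1, hx.2]) (by linarith [ht.2, hx.1])]
      exact sub_ne_zero.2 htx
    simpa using (Real.cos_le_one _).lt_of_ne hne
  have hlim := tendsto_setIntegral_pow_smul_of_unique_maximum_of_isCompact_of_integrableOn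
    (c := fun t ↦ 2 + Real.cos (t - x)) isCompact_Icc (by fun_prop) hmax (fun t _ ↦ (hpos t).le)
    (hpos x) (by
      rw [interior_Icc, closure_Ioo (by linarith [Real.pi_pos])]
      exact Ioo_subset_Icc_self hx) hg hgx.continuousWithinAt
  refine mem_closure_of_tendsto hlim (.of_forall fun n ↦ (trigMomentCone g hg).smul_mem ?_
    ⟨n * 1, _, (isTrigPoly_two_add_cos_sub x).pow n, fun t ↦ pow_pos (hpos t) n, rfl⟩)
  rw [inv_pos, integral_Icc_eq_integral_Ioc,
    ← intervalIntegral.integral_of_le (by linarith [Real.pi_pos])]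
  exact intervalIntegral.intervalIntegral_pos_of_pos
    (Continuous.intervalIntegrable (by fun_prop) _ _) (fun t ↦ pow_pos (hpos t) n)
    (by linarith [Real.pi_pos])

end MomentCone

lemma exists_pos_mul_add_eq_zero {a b : ℝ} (h : a * b < 0) :
    ∃ c d : ℝ, 0 < c ∧ 0 < d ∧ c * a + d * b = 0 :=
  ⟨|b|, |a|, abs_pos.2 (right_ne_zero_of_mul h.ne), abs_pos.2 (left_ne_zero_of_mul h.ne), by
    obtain ⟨ha, hb⟩ | ⟨ha, hb⟩ := mul_neg_iff.1 h
    · rw [abs_of_neg hb, abs_of_pos ha]; ring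
    · rw [abs_of_pos hb, abs_of_neg ha]; ring⟩

lemma zero_mem_convexCone_of_quadrants {K : ConvexCone ℝ (ℝ × ℝ)}
    (hpp : (closure (K : Set (ℝ × ℝ)) ∩ Ioi 0 ×ˢ Ioi 0).Nonempty)
    (hnp : (closure (K : Set (ℝ × ℝ)) ∩ Iio 0 ×ˢ Ioi 0).Nonempty)
    (hnn : (closure (K : Set (ℝ × ℝ)) ∩ Iio 0 ×ˢ Iio 0).Nonempty)
    (hpn : (closure (K : Set (ℝ × ℝ)) ∩ Ioi 0 ×ˢ Iio 0).Nonempty) : (0 : ℝ × ℝ) ∈ K := by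
  obtain ⟨a, haK, ha₁, ha₂⟩ :=
    (closure_inter_open_nonempty_iff (isOpen_Ioi.prod isOpen_Ioi)).1 hpp
  obtain ⟨b, hbK, hb₁, hb₂⟩ :=
    (closure_inter_open_nonempty_iff (isOpen_Iio.prod isOpen_Ioi)).1 hnp
  obtain ⟨c, hcK, hc₁, hc₂⟩ :=
    (closure_inter_open_nonempty_iff (isOpen_Iio.prod isOpen_Iio)).1 hnn
  obtain ⟨d, hdK, hd₁, hd₂⟩ :=
    (closure_inter_open_nonempty_iff (isOpen_Ioi.prod isOpen_Iio)).1 hpn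
  rw [mem_Ioi] at ha₁ ha₂ hb₂ hd₁
  rw [mem_Iio] at hb₁ hc₁ hc₂ hd₂
  obtain ⟨ra, rb, hra, hrb, hab⟩ := exists_pos_mul_add_eq_zero (mul_neg_of_pos_of_neg ha₁ hb₁)
  obtain ⟨rc, rd, hrc, hrd, hcd⟩ := exists_pos_mul_add_eq_zero (mul_neg_of_neg_of_pos hc₁ hd₁)
  have hup : 0 < ra * a.2 + rb * b.2 := by positivity
  have hdown : rc * c.2 + rd * d.2 < 0 := by nlinarith
  obtain ⟨r, s, hr, hs, hrs⟩ := exists_pos_mul_add_eq_zero (mul_neg_of_pos_of_neg hup hdown)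
  convert K.add_mem (K.smul_mem hr (K.add_mem (K.smul_mem hra haK) (K.smul_mem hrb hbK)))
    (K.smul_mem hs (K.add_mem (K.smul_mem hrc hcK) (K.smul_mem hrd hdK))) using 1
  ext
  · simp only [Prod.fst_zero, Prod.fst_add, Prod.smul_fst, smul_eq_mul, hab, hcd]
    ring
  · simp only [Prod.snd_zero, Prod.snd_add, Prod.smul_snd, smul_eq_mul, hrs]

section PlanarWeight

variable {φ : ℝ → ℝ} {t₀ p q : ℝ}

-- The second weight is `φ / 2` on `(p, q]` and `-φ / 2` elsewhere, so on the four arcs cut out by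
-- `p`, `t₀`, `q` the pair of weights takes values in the four open quadrants.
lemma zero_mem_trigMomentCone_indicator (hφ : Continuous φ) (hφpos : ∀ t ∈ Ioo (-π) t₀, 0 < φ t)
    (hφneg : ∀ t ∈ Ioo t₀ π, φ t < 0) (hp : p ∈ Ioo (-π) t₀) (hq : q ∈ Ioo t₀ π)
    (hg : IntegrableOn (fun t ↦ (φ t, (Ioc p q).indicator φ t - φ t / 2)) (Icc (-π) π)) :
    (0 : ℝ × ℝ) ∈ trigMomentCone _ hg := by
  obtain ⟨⟨hπp, hpt⟩, htq, hqπ⟩ := And.intro hp hq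
  have hclosure {x : ℝ} (hx : x ∈ Ioo (-π) π) (hxp : x ≠ p) (hxq : x ≠ q) :
      (φ x, (Ioc p q).indicator φ x - φ x / 2) ∈ closure (trigMomentCone _ hg : Set (ℝ × ℝ)) := by
    have hcont : ContinuousAt ((Ioc p q).indicator φ) x :=
      hφ.continuousOn.continuousAt_indicator <| by simp [frontier_Ioc (hpt.trans htq), hxp, hxq]
    exact mem_closure_trigMomentCone hg hx
      (hφ.continuousAt.prodMk (hcont.sub (hφ.div_const 2).continuousAt))
  have hin {x : ℝ} (hpx : p < x) (hxq : x < q) :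
      (φ x, φ x / 2) ∈ closure (trigMomentCone _ hg : Set (ℝ × ℝ)) := by
    convert hclosure ⟨hπp.trans hpx, hxq.trans hqπ⟩ hpx.ne' hxq.ne using 2
    rw [indicator_of_mem (mem_Ioc.2 ⟨hpx, hxq.le⟩), sub_half]
  have hout {x : ℝ} (hπx : -π < x) (hxπ : x < π) (hx : x < p ∨ q < x) :
      (φ x, -(φ x / 2)) ∈ closure (trigMomentCone _ hg : Set (ℝ × ℝ)) := by
    convert hclosure ⟨hπx, hxπ⟩ (by grind) (by grind) using 2
    rw [indicator_of_notMem (by grind), zero_sub]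
  obtain ⟨a, hπa, hap⟩ := exists_between hπp
  obtain ⟨b, hpb, hbt⟩ := exists_between hpt
  obtain ⟨c, htc, hcq⟩ := exists_between htq
  obtain ⟨d, hqd, hdπ⟩ := exists_between hqπ
  have hφa := hφpos a ⟨hπa, hap.trans hpt⟩
  have hφb := hφpos b ⟨hπp.trans hpb, hbt⟩
  have hφc := hφneg c ⟨htc, hcq.trans hqπ⟩
  have hφd := hφneg d ⟨htq.trans hqd, hdπ⟩
  exact zero_mem_convexCone_of_quadrants
    ⟨_, hin hpb (hbt.trans htq), hφb, half_pos hφb⟩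
    ⟨_, hout (by linarith) hdπ (.inr hqd), hφd, neg_pos.2 (div_neg_of_neg_of_pos hφd two_pos)⟩
    ⟨_, hin (hpt.trans htc) hcq, hφc, div_neg_of_neg_of_pos hφc two_pos⟩
    ⟨_, hout hπa (by linarith) (.inl hap), hφa, neg_lt_zero.2 (half_pos hφa)⟩

lemma exists_isTrigPoly_pos_integral_eq_zero (hφ : Continuous φ)
    (hφpos : ∀ t ∈ Ioo (-π) t₀, 0 < φ t) (hφneg : ∀ t ∈ Ioo t₀ π, φ t < 0)
    (hp : p ∈ Ioo (-π) t₀) (hq : q ∈ Ioo t₀ π) :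
    ∃ n K, IsTrigPoly n K ∧ (∀ t, 0 < K t) ∧ ∫ t in -π..π, K t * φ t = 0 ∧
      ∫ t in p..q, K t * φ t = 0 := by
  have hφI : IntegrableOn φ (Icc (-π) π) := hφ.integrableOn_Icc
  have hψI : IntegrableOn ((Ioc p q).indicator φ) (Icc (-π) π) := hφI.indicator measurableSet_Ioc
  have hχI : IntegrableOn (fun t ↦ (Ioc p q).indicator φ t - φ t / 2) (Icc (-π) π) :=
    hψI.sub (hφI.div_const 2)
  obtain ⟨n, K, hK, hKpos, hint⟩ :=
    zero_mem_trigMomentCone_indicator hφ hφpos hφneg hp hq (hφI.prodMk hχI)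
  have hKsmul {f : ℝ → ℝ} (hf : IntegrableOn f (Icc (-π) π)) :
      IntegrableOn (fun t ↦ K t • f t) (Icc (-π) π) :=
    hf.continuousOn_smul hK.continuous.continuousOn isCompact_Icc
  simp only [Prod.smul_mk] at hint
  rw [integral_pair (hKsmul hφI) (hKsmul hχI), Prod.mk_eq_zero] at hint
  obtain ⟨hint₁, hint₂⟩ := hint
  have hsplit : ∫ t in Icc (-π) π, K t • ((Ioc p q).indicator φ t - φ t / 2) =
      (∫ t in Ioc p q, K t • φ t) - (∫ t in Icc (-π) π, K t • φ t) / 2 := by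
    have hpoint (t : ℝ) : K t • ((Ioc p q).indicator φ t - φ t / 2) =
        (Ioc p q).indicator (fun t ↦ K t • φ t) t - K t • φ t / 2 := by
      rw [indicator_smul_apply (Ioc p q) K φ t, smul_sub, smul_eq_mul _ (φ t / 2), ← mul_div_assoc,
        smul_eq_mul _ (φ t)]
    simp only [hpoint]
    rw [integral_sub ((hKsmul hφI).indicator measurableSet_Ioc) ((hKsmul hφI).div_const 2),
      setIntegral_indicator measurableSet_Ioc, integral_div,
      inter_eq_right.2 (Ioc_subset_Icc_self.trans (Icc_subset_Icc hp.1.le hq.2.le))]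
  rw [hsplit, hint₁, zero_div, sub_zero] at hint₂
  refine ⟨n, K, hK, hKpos, ?_, ?_⟩
  · rwa [intervalIntegral.integral_of_le (by linarith [hp.1, hp.2, hq.1, hq.2]),
      ← integral_Icc_eq_integral_Ioc]
  · rwa [intervalIntegral.integral_of_le (hp.2.trans hq.1).le]

end PlanarWeight

/-- `v` rises strictly from `0` at `a` to `1` at `c`, then falls strictly back to `0` at `b`. -/
structure IsUnitPeak (a c b : ℝ) (v : ℝ → ℝ) : Prop where
  left : v a = 0
  right : v b = 0
  peak : v c = 1
  strictMonoOn : StrictMonoOn v (Icc a c)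
  strictAntiOn : StrictAntiOn v (Icc c b)

namespace IsUnitPeak

variable {a b c p q t : ℝ} {f v : ℝ → ℝ}

lemma of_strictMonoOn_strictAntiOn (hac : a < c) (hmono : StrictMonoOn v (Icc a c))
    (hanti : StrictAntiOn v (Icc c b)) (hab : v a = v b) :
    IsUnitPeak a c b fun t ↦ (v c - v a)⁻¹ * (v t + -v a) := by
  have hlt : v a < v c := hmono (left_mem_Icc.2 hac.le) (right_mem_Icc.2 hac.le) hac
  have hpos : 0 < (v c - v a)⁻¹ := inv_pos.2 (sub_pos.2 hlt)
  refine ⟨by simp, by simp [hab], inv_mul_cancel₀ (sub_pos.2 hlt).ne', ?_, ?_⟩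
  · exact fun x hx y hy hxy ↦
      mul_lt_mul_of_pos_left ((add_lt_add_iff_right _).2 (hmono hx hy hxy)) hpos
  · exact fun x hx y hy hxy ↦
      mul_lt_mul_of_pos_left ((add_lt_add_iff_right _).2 (hanti hx hy hxy)) hpos

lemma nonneg (hv : IsUnitPeak a c b v) (ht : t ∈ Icc a b) : 0 ≤ v t := by
  obtain htc | hct := le_total t c
  · rw [← hv.left]
    exact hv.strictMonoOn.monotoneOn (left_mem_Icc.2 (ht.1.trans htc)) ⟨ht.1, htc⟩ ht.1
  · rw [← hv.right]
    exact hv.strictAntiOn.antitoneOn ⟨hct, ht.2⟩ (right_mem_Icc.2 (hct.trans ht.2)) ht.2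

lemma lt_one (hv : IsUnitPeak a c b v) (ht : t ∈ Icc a b) (htc : t ≠ c) : v t < 1 := by
  rw [← hv.peak]
  obtain htc | hct := htc.lt_or_gt
  · exact hv.strictMonoOn ⟨ht.1, htc.le⟩ (right_mem_Icc.2 (ht.1.trans htc.le)) htc
  · exact hv.strictAntiOn (left_mem_Icc.2 (hct.le.trans ht.2)) ⟨hct.le, ht.2⟩ hct

lemma mem_Icc (hv : IsUnitPeak a c b v) (ht : t ∈ Icc a b) : v t ∈ Icc 0 1 := by
  obtain rfl | htc := eq_or_ne t c
  exacts [⟨hv.nonneg ht, hv.peak.le⟩, ⟨hv.nonneg ht, (hv.lt_one ht htc).le⟩]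

lemma le_of_notMem_Ioo (hv : IsUnitPeak a c b v) (hp : p ≤ c) (hq : c ≤ q) (hpq : v p = v q)
    (ht : t ∈ Icc a b \ Ioo p q) : v t ≤ v p := by
  obtain ⟨⟨hat, htb⟩, hnot⟩ := ht
  obtain htp | hqt : t ≤ p ∨ q ≤ t := by grind
  · exact hv.strictMonoOn.monotoneOn ⟨hat, htp.trans hp⟩ ⟨hat.trans htp, hp⟩ htp
  · rw [hpq]
    exact hv.strictAntiOn.antitoneOn ⟨hq, hqt.trans htb⟩ ⟨hq.trans hqt, htb⟩ hqt

lemma lt_of_notMem_Icc (hv : IsUnitPeak a c b v) (hp : p ≤ c) (hq : c ≤ q) (hpq : v p = v q)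
    (ht : t ∈ Icc a b \ Icc p q) : v t < v p := by
  obtain ⟨⟨hat, htb⟩, hnot⟩ := ht
  obtain htp | hqt : t < p ∨ q < t := by grind
  · exact hv.strictMonoOn ⟨hat, htp.le.trans hp⟩ ⟨hat.trans htp.le, hp⟩ htp
  · rw [hpq]
    exact hv.strictAntiOn ⟨hq, hqt.le.trans htb⟩ ⟨hq.trans hqt.le, htb⟩ hqt

lemma min_le_of_mem_Icc (hv : IsUnitPeak a c b v) (hp : p ∈ Icc a c) (hq : q ∈ Icc c b)
    (ht : t ∈ Icc p q) : min (v p) (v q) ≤ v t := by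
  obtain htc | hct := le_total t c
  · exact min_le_of_left_le (hv.strictMonoOn.monotoneOn hp ⟨hp.1.trans ht.1, htc⟩ ht.1)
  · exact min_le_of_right_le (hv.strictAntiOn.antitoneOn ⟨hct, ht.2.trans hq.2⟩ hq ht.2)

lemma strictMonoOn_comp (hv : IsUnitPeak a c b v) (hp : p ∈ Icc a c)
    (hf : StrictMonoOn f (Icc (v p) 1)) : StrictMonoOn (fun t ↦ f (v t)) (Icc p c) := by
  refine hf.comp (hv.strictMonoOn.mono (Icc_subset_Icc_left hp.1)) fun t ht ↦ ?_
  rw [← hv.peak]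
  exact ⟨hv.strictMonoOn.monotoneOn hp ⟨hp.1.trans ht.1, ht.2⟩ ht.1,
    hv.strictMonoOn.monotoneOn ⟨hp.1.trans ht.1, ht.2⟩ (right_mem_Icc.2 (hp.1.trans hp.2)) ht.2⟩

lemma strictAntiOn_comp (hv : IsUnitPeak a c b v) (hq : q ∈ Icc c b)
    (hf : StrictMonoOn f (Icc (v q) 1)) : StrictAntiOn (fun t ↦ f (v t)) (Icc c q) := by
  refine hf.comp_strictAntiOn (hv.strictAntiOn.mono (Icc_subset_Icc_right hq.2)) fun t ht ↦ ?_
  rw [← hv.peak]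
  exact ⟨hv.strictAntiOn.antitoneOn ⟨ht.1, ht.2.trans hq.2⟩ hq ht.2,
    hv.strictAntiOn.antitoneOn (left_mem_Icc.2 (hq.1.trans hq.2)) ⟨ht.1, ht.2.trans hq.2⟩ ht.1⟩

end IsUnitPeak

section TrigPeak

variable {p q t t₀ : ℝ}

lemma isTrigPoly_sin_sub_mul_cos (t₀ : ℝ) :
    IsTrigPoly 1 fun t ↦ Real.sin ((t₀ - t) / 2) * Real.cos (t / 2) := by
  convert (IsTrigPoly.const 1 (Real.sin (t₀ / 2) / 2)).add
    (((IsTrigPoly.cos_nat_mul le_rfl).const_mul (Real.sin (t₀ / 2) / 2)).add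
    ((IsTrigPoly.sin_nat_mul le_rfl).const_mul (-(Real.cos (t₀ / 2) / 2)))) using 2 with t
  obtain ⟨u, rfl⟩ : ∃ u, t = 2 * u := ⟨t / 2, by ring⟩
  rw [Nat.cast_one, one_mul, Real.cos_two_mul, Real.sin_two_mul, sub_div, Real.sin_sub,
    mul_div_cancel_left₀ u two_ne_zero]
  ring

lemma sin_sub_mul_cos_pos (ht : t ∈ Ioo (-π) t₀) (ht₀ : t₀ < π) :
    0 < Real.sin ((t₀ - t) / 2) * Real.cos (t / 2) := by
  obtain ⟨hπt, htt₀⟩ := ht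
  exact mul_pos (Real.sin_pos_of_pos_of_lt_pi (by linarith) (by linarith))
    (Real.cos_pos_of_mem_Ioo ⟨by linarith, by linarith⟩)

lemma sin_sub_mul_cos_neg (ht₀ : -π < t₀) (ht : t ∈ Ioo t₀ π) :
    Real.sin ((t₀ - t) / 2) * Real.cos (t / 2) < 0 := by
  obtain ⟨ht₀t, htπ⟩ := ht
  exact mul_neg_of_neg_of_pos (Real.sin_neg_of_neg_of_neg_pi_lt (by linarith) (by linarith))
    (Real.cos_pos_of_mem_Ioo ⟨by linarith, by linarith⟩)

-- The peak is a primitive of `K φ`, where `φ` changes sign exactly at `t₀` and `K > 0` makes the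
-- integrals of `K φ` over the period and over `[p, q]` vanish.
lemma exists_isTrigPoly_isUnitPeak (hp : p ∈ Ioo (-π) t₀) (hq : q ∈ Ioo t₀ π) :
    ∃ n v, IsTrigPoly n v ∧ IsUnitPeak (-π) t₀ π v ∧ v p = v q := by
  set φ : ℝ → ℝ := fun t ↦ Real.sin ((t₀ - t) / 2) * Real.cos (t / 2)
  have hφ : IsTrigPoly 1 φ := isTrigPoly_sin_sub_mul_cos t₀
  have hπt₀ : -π < t₀ := hp.1.trans hp.2
  have hφpos : ∀ t ∈ Ioo (-π) t₀, 0 < φ t := fun t ht ↦ sin_sub_mul_cos_pos ht (hq.1.trans hq.2)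
  have hφneg : ∀ t ∈ Ioo t₀ π, φ t < 0 := fun t ht ↦ sin_sub_mul_cos_neg hπt₀ ht
  obtain ⟨n, K, hK, hKpos, hperiod, hpq⟩ :=
    exists_isTrigPoly_pos_integral_eq_zero hφ.continuous hφpos hφneg hp hq
  obtain ⟨V, hV, hderiv⟩ := (hK.mul hφ).exists_primitive hperiod
  have hmono : StrictMonoOn V (Icc (-π) t₀) := by
    refine strictMonoOn_of_deriv_pos (convex_Icc _ _) hV.continuous.continuousOn fun t ht ↦ ?_
    rw [interior_Icc] at ht
    exact (hderiv t).deriv ▸ mul_pos (hKpos t) (hφpos t ht)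
  have hanti : StrictAntiOn V (Icc t₀ π) := by
    refine strictAntiOn_of_deriv_neg (convex_Icc _ _) hV.continuous.continuousOn fun t ht ↦ ?_
    rw [interior_Icc] at ht
    exact (hderiv t).deriv ▸ mul_neg_of_pos_of_neg (hKpos t) (hφneg t ht)
  have hbalance : V q - V p = 0 := hpq ▸ (intervalIntegral.integral_eq_sub_of_hasDerivAt
    (fun t _ ↦ hderiv t) ((hK.mul hφ).continuous.intervalIntegrable p q)).symm
  exact ⟨n + 1, _, (hV.add (.const _ _)).const_mul _,
    .of_strictMonoOn_strictAntiOn hπt₀ hmono hanti hV.apply_neg_pi, by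
      rw [sub_eq_zero.1 hbalance]⟩

end TrigPeak

section Primitive

variable {F : Type*} [Field F]

/-- The primitive of a polynomial that vanishes at `0`. -/
noncomputable def polyPrimitive (P : F[X]) : F[X] :=
  P.sum fun i a ↦ monomial (i + 1) (a / (i + 1))

@[simp]
lemma eval_zero_polyPrimitive (P : F[X]) : (polyPrimitive P).eval 0 = 0 := by
  simp [polyPrimitive, Polynomial.sum, eval_finsetSum]

lemma natDegree_polyPrimitive_le (P : F[X]) : (polyPrimitive P).natDegree ≤ P.natDegree + 1 :=
  natDegree_sum_le_of_forall_le _ _ fun i hi ↦ (natDegree_monomial_le _).trans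
    (Nat.succ_le_succ (le_natDegree_of_mem_supp i hi))

@[simp]
lemma derivative_polyPrimitive [CharZero F] (P : F[X]) : derivative (polyPrimitive P) = P := by
  conv_rhs => rw [← sum_monomial_eq P]
  rw [polyPrimitive, Polynomial.sum, derivative_sum]
  refine Finset.sum_congr rfl fun i _ ↦ ?_
  have : (i : F) + 1 ≠ 0 := Nat.cast_add_one_ne_zero i
  simp [this]

end Primitive

section SmoothStep

variable {N : ℕ} {h x₀ y : ℝ}

/-- The primitive on `[0, 1]` of `(1 - (x - x₀) ^ 2) ^ N`, whose mass concentrates at `x₀`. -/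
noncomputable def concentratedPrimitive (x₀ : ℝ) (N : ℕ) : ℝ[X] :=
  polyPrimitive ((1 - (X - C x₀) ^ 2) ^ N)

/-- A polynomial rising from `0` at `0` to `1` at `1`, with a steep step at `x₀` for large `N`. -/
noncomputable def smoothStep (x₀ : ℝ) (N : ℕ) : ℝ[X] :=
  C ((concentratedPrimitive x₀ N).eval 1)⁻¹ * concentratedPrimitive x₀ N

lemma deriv_eval_concentratedPrimitive (x₀ x : ℝ) (N : ℕ) :
    deriv (fun y ↦ (concentratedPrimitive x₀ N).eval y) x = (1 - (x - x₀) ^ 2) ^ N := by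
  simp [concentratedPrimitive, Polynomial.deriv]

lemma strictMonoOn_eval_concentratedPrimitive (hx₀ : x₀ ∈ Icc 0 1) (N : ℕ) :
    StrictMonoOn (fun y ↦ (concentratedPrimitive x₀ N).eval y) (Icc 0 1) := by
  refine strictMonoOn_of_deriv_pos (convex_Icc _ _) (Polynomial.continuous _).continuousOn
    fun x hx ↦ ?_
  rw [interior_Icc] at hx
  rw [deriv_eval_concentratedPrimitive]
  exact pow_pos (by nlinarith [hx.1, hx.2, hx₀.1, hx₀.2]) N

lemma eval_one_concentratedPrimitive_pos (hx₀ : x₀ ∈ Icc 0 1) (N : ℕ) :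
    0 < (concentratedPrimitive x₀ N).eval 1 := by
  simpa [concentratedPrimitive] using strictMonoOn_eval_concentratedPrimitive hx₀ N
    (left_mem_Icc.2 zero_le_one) (right_mem_Icc.2 zero_le_one) zero_lt_one

lemma natDegree_smoothStep_le (x₀ : ℝ) (N : ℕ) : (smoothStep x₀ N).natDegree ≤ 2 * N + 1 := by
  have hdegree : ((1 - (X - C x₀) ^ 2) ^ N : ℝ[X]).natDegree ≤ N * 2 :=
    natDegree_pow_le_of_le N (by compute_degree)
  refine (natDegree_C_mul_le _ _).trans ((natDegree_polyPrimitive_le _).trans ?_)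
  lia

@[simp]
lemma eval_zero_smoothStep (x₀ : ℝ) (N : ℕ) : (smoothStep x₀ N).eval 0 = 0 := by
  simp [smoothStep, concentratedPrimitive]

lemma eval_one_smoothStep (hx₀ : x₀ ∈ Icc 0 1) (N : ℕ) : (smoothStep x₀ N).eval 1 = 1 := by
  simp [smoothStep, (eval_one_concentratedPrimitive_pos hx₀ N).ne']

lemma strictMonoOn_eval_smoothStep (hx₀ : x₀ ∈ Icc 0 1) (N : ℕ) :
    StrictMonoOn (fun y ↦ (smoothStep x₀ N).eval y) (Icc 0 1) := by
  intro x hx y hy hxy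
  simp only [smoothStep, eval_mul, eval_C]
  exact mul_lt_mul_of_pos_left (strictMonoOn_eval_concentratedPrimitive hx₀ N hx hy hxy)
    (inv_pos.2 (eval_one_concentratedPrimitive_pos hx₀ N))

lemma le_eval_one_concentratedPrimitive (hh : 0 < h) (hx₀ : 0 ≤ x₀ - h) (hx₀' : x₀ + h ≤ 1)
    (N : ℕ) : h * (1 - (h / 2) ^ 2) ^ N ≤ (concentratedPrimitive x₀ N).eval 1 := by
  set R := concentratedPrimitive x₀ N with hR
  have hincr : (1 - (h / 2) ^ 2) ^ N * (x₀ + h / 2 - (x₀ - h / 2)) ≤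
      R.eval (x₀ + h / 2) - R.eval (x₀ - h / 2) := by
    refine (convex_Icc (x₀ - h / 2) (x₀ + h / 2)).mul_sub_le_image_sub_of_le_deriv
      R.continuous.continuousOn R.differentiable.differentiableOn (fun x hx ↦ ?_) _
      (left_mem_Icc.2 (by linarith)) _ (right_mem_Icc.2 (by linarith)) (by linarith)
    rw [interior_Icc] at hx
    rw [hR, deriv_eval_concentratedPrimitive]
    exact pow_le_pow_left₀ (by nlinarith) (by nlinarith [hx.1, hx.2]) _
  have hx₀I : x₀ ∈ Icc 0 1 := ⟨by linarith, by linarith⟩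
  have hmono := (strictMonoOn_eval_concentratedPrimitive hx₀I N).monotoneOn
  have hleft : R.eval 0 ≤ R.eval (x₀ - h / 2) :=
    hmono (left_mem_Icc.2 zero_le_one) ⟨by linarith, by linarith⟩ (by linarith)
  have hright : R.eval (x₀ + h / 2) ≤ R.eval 1 :=
    hmono ⟨by linarith, by linarith⟩ (right_mem_Icc.2 zero_le_one) (by linarith)
  have hzero : R.eval 0 = 0 := eval_zero_polyPrimitive _
  linarith

/-- The geometric rate at which `smoothStep` converges at distance at least `h` from its step. -/
noncomputable def stepRate (h : ℝ) : ℝ := (1 - h ^ 2) / (1 - (h / 2) ^ 2)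

lemma stepRate_pos (hh : 0 < h) (hh' : h < 1) : 0 < stepRate h :=
  div_pos (by nlinarith) (by nlinarith)

lemma stepRate_lt_one (hh : 0 < h) (hh' : h < 1) : stepRate h < 1 :=
  (div_lt_one (by nlinarith)).2 (by nlinarith)

lemma eval_smoothStep_sub_le {x : ℝ} (hh : 0 < h) (hx₀ : 0 ≤ x₀ - h) (hx₀' : x₀ + h ≤ 1)
    (hx : 0 ≤ x) (hxy : x ≤ y) (hy : y ≤ 1) (hfar : y ≤ x₀ - h ∨ x₀ + h ≤ x) :
    (smoothStep x₀ N).eval y - (smoothStep x₀ N).eval x ≤ h⁻¹ * stepRate h ^ N * (y - x) := by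
  have hmass := le_eval_one_concentratedPrimitive hh hx₀ hx₀' N
  have hfactor' : 0 < 1 - (h / 2) ^ 2 := by nlinarith
  have hpos : 0 < h * (1 - (h / 2) ^ 2) ^ N := by positivity
  have : 0 ≤ 1 - h ^ 2 := by nlinarith
  set R := concentratedPrimitive x₀ N with hR
  have hincr : R.eval y - R.eval x ≤ (1 - h ^ 2) ^ N * (y - x) := by
    refine (convex_Icc x y).image_sub_le_mul_sub_of_deriv_le R.continuous.continuousOn
      R.differentiable.differentiableOn (fun z hz ↦ ?_) _ (left_mem_Icc.2 hxy) _
      (right_mem_Icc.2 hxy) hxy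
    rw [interior_Icc] at hz
    rw [hR, deriv_eval_concentratedPrimitive]
    refine pow_le_pow_left₀ (by nlinarith [hz.1, hz.2]) ?_ _
    obtain hyx₀ | hx₀x := hfar <;> nlinarith [hz.1, hz.2]
  calc (smoothStep x₀ N).eval y - (smoothStep x₀ N).eval x
      = (R.eval 1)⁻¹ * (R.eval y - R.eval x) := by simp [smoothStep, hR, mul_sub]
    _ ≤ (h * (1 - (h / 2) ^ 2) ^ N)⁻¹ * ((1 - h ^ 2) ^ N * (y - x)) := by
      refine mul_le_mul (inv_anti₀ hpos hmass) hincr (sub_nonneg.2 ?_) (by positivity)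
      exact (strictMonoOn_eval_concentratedPrimitive ⟨by linarith, by linarith⟩ N).monotoneOn
        ⟨hx, hxy.trans hy⟩ ⟨hx.trans hxy, hy⟩ hxy
    _ = h⁻¹ * stepRate h ^ N * (y - x) := by
      rw [stepRate, div_pow _ _ N, mul_inv, div_eq_mul_inv _ (_ ^ N)]
      generalize (1 - (h / 2) ^ 2) ^ N = a
      ring

lemma eval_smoothStep_le (hh : 0 < h) (hx₀' : x₀ + h ≤ 1) (hy : y ∈ Icc 0 (x₀ - h)) :
    (smoothStep x₀ N).eval y ≤ h⁻¹ * stepRate h ^ N * y := by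
  simpa using eval_smoothStep_sub_le (N := N) hh (hy.1.trans hy.2) hx₀' le_rfl hy.1
    (by linarith [hy.2]) (.inl hy.2)

lemma one_sub_eval_smoothStep_le (hh : 0 < h) (hx₀ : 0 ≤ x₀ - h) (hy : y ∈ Icc (x₀ + h) 1) :
    1 - (smoothStep x₀ N).eval y ≤ h⁻¹ * stepRate h ^ N := by
  have hx₀' : x₀ + h ≤ 1 := hy.1.trans hy.2
  have hy₀ : 0 ≤ y := by linarith [hy.1]
  have hrate : 0 ≤ stepRate h := (stepRate_pos hh (by linarith)).le
  calc 1 - (smoothStep x₀ N).eval y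
      = (smoothStep x₀ N).eval 1 - (smoothStep x₀ N).eval y := by
        rw [eval_one_smoothStep ⟨by linarith, by linarith⟩]
    _ ≤ h⁻¹ * stepRate h ^ N * (1 - y) :=
        eval_smoothStep_sub_le hh hx₀ hx₀' hy₀ hy.2 le_rfl (.inr hy.1)
    _ ≤ h⁻¹ * stepRate h ^ N := mul_le_of_le_one_right (by positivity) (by linarith)

lemma exists_polynomial_steep {y₁ y₂ : ℝ} (hy₁ : 0 ≤ y₁) (hy₁₂ : y₁ < y₂) (hy₂ : y₂ ≤ 1) :
    ∃ A r : ℝ, 0 < A ∧ 0 < r ∧ r < 1 ∧ ∀ N, ∃ S : ℝ[X], S.natDegree ≤ 2 * N + 1 ∧ X ∣ S ∧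
      S.eval 1 = 1 ∧ StrictMonoOn (fun y ↦ S.eval y) (Icc 0 1) ∧
      (∀ y ∈ Icc 0 y₁, S.eval y ≤ A * r ^ N * y) ∧ ∀ y ∈ Icc y₂ 1, 1 - S.eval y ≤ A * r ^ N := by
  obtain ⟨x₀, h, rfl, rfl⟩ : ∃ x₀ h, y₁ = x₀ - h ∧ y₂ = x₀ + h :=
    ⟨(y₂ + y₁) / 2, (y₂ - y₁) / 2, by ring, by ring⟩
  have hh : 0 < h := by linarith
  have hh' : h < 1 := by linarith
  have hx₀ : x₀ ∈ Icc 0 1 := ⟨by linarith, by linarith⟩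
  exact ⟨h⁻¹, stepRate h, inv_pos.2 hh, stepRate_pos hh hh', stepRate_lt_one hh hh', fun N ↦
    ⟨smoothStep x₀ N, natDegree_smoothStep_le x₀ N,
      X_dvd_iff.2 (by rw [coeff_zero_eq_eval_zero, eval_zero_smoothStep]),
      eval_one_smoothStep hx₀ N, strictMonoOn_eval_smoothStep hx₀ N,
      fun _ ↦ eval_smoothStep_le hh hy₂, fun _ ↦ one_sub_eval_smoothStep_le hh hy₁⟩⟩

end SmoothStep

/-- `f` is nonnegative on `[0, 1]`, strictly increasing on `[p, 1]`, and on `[0, 1]` it has the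
maximum `1`, attained only at `1`. -/
structure IsPeaked (p : ℝ) (f : ℝ → ℝ) : Prop where
  one : f 1 = 1
  nonneg : ∀ x ∈ Icc 0 1, 0 ≤ f x
  lt_one : ∀ x ∈ Ico 0 1, f x < 1
  strictMonoOn : StrictMonoOn f (Icc p 1)

namespace IsPeaked

variable {p x : ℝ} {f g : ℝ → ℝ}

lemma mem_Icc (hf : IsPeaked p f) (hx : x ∈ Icc 0 1) : f x ∈ Icc 0 1 := by
  obtain rfl | hx1 := eq_or_ne x 1
  · simp [hf.one]
  · exact ⟨hf.nonneg x hx, (hf.lt_one x ⟨hx.1, hx.2.lt_of_ne hx1⟩).le⟩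

lemma comp_left (hf : IsPeaked p f) (hp : 0 ≤ p) (hg₀ : g 0 = 0) (hg₁ : g 1 = 1)
    (hg : StrictMonoOn g (Icc 0 1)) : IsPeaked p fun x ↦ g (f x) where
  one := by rw [hf.one, hg₁]
  nonneg x hx := hg₀ ▸ hg.monotoneOn (left_mem_Icc.2 zero_le_one) (hf.mem_Icc hx) (hf.nonneg x hx)
  lt_one x hx := (hg (hf.mem_Icc (Ico_subset_Icc_self hx)) (right_mem_Icc.2 zero_le_one)
    (hf.lt_one x hx)).trans_eq hg₁
  strictMonoOn := hg.comp hf.strictMonoOn fun _ hx ↦ hf.mem_Icc ⟨hp.trans hx.1, hx.2⟩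

end IsPeaked

section PeakedPolynomial

variable {p q : ℝ} {W : ℝ[X]}

lemma exists_pow_mul_le_lt {w : ℝ → ℝ} (hw : ContinuousOn w (Icc 0 p)) (hp : 0 ≤ p) (hpq : p < q)
    (hwq : 0 < w q) :
    ∃ (n : ℕ) (y : ℝ), (∀ x ∈ Icc 0 p, x ^ n * w x ≤ y) ∧ y < q ^ n * w q := by
  obtain ⟨B, hB⟩ := isCompact_Icc.exists_bound_of_continuousOn hw
  have hq : 0 < q := hp.trans_lt hpq
  have hB₀ : 0 ≤ B := (norm_nonneg _).trans (hB 0 (left_mem_Icc.2 hp))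
  obtain ⟨n, hn⟩ := exists_pow_lt_of_lt_one (show 0 < w q / (B + 1) by positivity)
    ((div_lt_one hq).2 hpq)
  rw [div_pow, div_lt_div_iff₀ (by positivity) (by positivity)] at hn
  refine ⟨n, p ^ n * B, fun x hx ↦ ?_, ?_⟩
  · calc x ^ n * w x ≤ x ^ n * B :=
          mul_le_mul_of_nonneg_left ((le_abs_self _).trans (hB x hx)) (pow_nonneg hx.1 n)
      _ ≤ p ^ n * B := mul_le_mul_of_nonneg_right (pow_le_pow_left₀ hx.1 hx.2 n) hB₀
  · calc p ^ n * B ≤ p ^ n * (B + 1) := by gcongr; exact le_add_of_nonneg_right zero_le_one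
      _ < q ^ n * w q := by rwa [mul_comm (q ^ n)]

lemma strictMonoOn_pow_mul {n : ℕ} (hn : n ≠ 0) {w : ℝ → ℝ} (hp : 0 ≤ p)
    (hw : MonotoneOn w (Icc p q)) (hwp : 0 < w p) :
    StrictMonoOn (fun x ↦ x ^ n * w x) (Icc p q) := by
  intro x hx y hy hxy
  have hx₀ : 0 ≤ x := hp.trans hx.1
  have hwx : 0 < w x := hwp.trans_le (hw (left_mem_Icc.2 (hx.1.trans hx.2)) hx hx.1)
  exact mul_lt_mul (pow_lt_pow_left₀ hxy hx₀ hn) (hw hx hy hxy.le) hwx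
    (pow_nonneg (hx₀.trans hxy.le) n)

-- `G` is the normalization of `X ^ (n + 1) * W` for large `n`.
lemma exists_isPeaked_dvd (hp : 0 ≤ p) (hpq : p < q) (hq : q ≤ 1)
    (hW : ∀ x ∈ Icc 0 1, 0 ≤ W.eval x) (hWmono : MonotoneOn (fun x ↦ W.eval x) (Icc p 1))
    (hWp : 0 < W.eval p) :
    ∃ (G : ℝ[X]) (C y : ℝ), W ∣ G ∧ (IsPeaked p fun x ↦ G.eval x) ∧
      (∀ x ∈ Icc 0 1, G.eval x ≤ C * W.eval x) ∧ (∀ x ∈ Icc 0 p, G.eval x ≤ y) ∧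
      y < G.eval q := by
  have hWpos {x : ℝ} (hx : x ∈ Icc p 1) : 0 < W.eval x :=
    hWp.trans_le (hWmono (left_mem_Icc.2 (hx.1.trans hx.2)) hx hx.1)
  have hW₁ : 0 < (W.eval 1)⁻¹ := inv_pos.2 (hWpos (right_mem_Icc.2 (hpq.le.trans hq)))
  obtain ⟨n, y, hle, hlt⟩ := exists_pow_mul_le_lt (w := fun x ↦ x * W.eval x) (by fun_prop) hp hpq
    (mul_pos (hp.trans_lt hpq) (hWpos ⟨hpq.le, hq⟩))
  set G : ℝ[X] := C (W.eval 1)⁻¹ * X ^ (n + 1) * W with hG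
  have hGeval (x : ℝ) : G.eval x = (W.eval 1)⁻¹ * (x ^ (n + 1) * W.eval x) := by
    simp [hG, mul_assoc]
  have hG₁ : G.eval 1 = 1 := by simp [hGeval, (inv_pos.1 hW₁).ne']
  have hGle : ∀ x ∈ Icc 0 p, G.eval x ≤ (W.eval 1)⁻¹ * y := fun x hx ↦ by
    rw [hGeval, pow_succ, mul_assoc]
    exact mul_le_mul_of_nonneg_left (hle x hx) hW₁.le
  have hGlt : (W.eval 1)⁻¹ * y < G.eval q := by
    rw [hGeval, pow_succ, mul_assoc]
    exact mul_lt_mul_of_pos_left hlt hW₁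
  have hGmono : StrictMonoOn (fun x ↦ G.eval x) (Icc p 1) := fun x hx x' hx' hxx' ↦ by
    simp only [hGeval]
    exact mul_lt_mul_of_pos_left
      (strictMonoOn_pow_mul n.succ_ne_zero hp hWmono hWp hx hx' hxx') hW₁
  refine ⟨G, (W.eval 1)⁻¹, _, dvd_mul_left _ _, ⟨hG₁, fun x hx ↦ ?_, fun x hx ↦ ?_, hGmono⟩,
    fun x hx ↦ ?_, hGle, hGlt⟩
  · rw [hGeval]
    exact mul_nonneg hW₁.le (mul_nonneg (pow_nonneg hx.1 _) (hW x hx))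
  · obtain hxp | hpx := le_total x p
    · calc G.eval x ≤ (W.eval 1)⁻¹ * y := hGle x ⟨hx.1, hxp⟩
        _ < G.eval q := hGlt
        _ ≤ 1 := hG₁ ▸ hGmono.monotoneOn ⟨hpq.le, hq⟩ ⟨hpq.le.trans hq, le_rfl⟩ hq
    · exact hG₁ ▸ hGmono ⟨hpx, hx.2.le⟩ ⟨hpq.le.trans hq, le_rfl⟩ hx.2
  · rw [hGeval]
    gcongr
    exact mul_le_of_le_one_left (hW x hx) (pow_le_one₀ hx.1 hx.2)

lemma exists_isPeaked_geometric (hp : 0 ≤ p) (hpq : p < q) (hq : q ≤ 1)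
    (hW : ∀ x ∈ Icc 0 1, 0 ≤ W.eval x) (hWmono : MonotoneOn (fun x ↦ W.eval x) (Icc p 1))
    (hWp : 0 < W.eval p) :
    ∃ (D : ℕ) (A r : ℝ), 0 < A ∧ 0 < r ∧ r < 1 ∧ ∀ N, ∃ H : ℝ[X],
      H.natDegree ≤ (2 * N + 1) * D ∧ W ∣ H ∧ (IsPeaked p fun x ↦ H.eval x) ∧
      (∀ x ∈ Icc 0 p, H.eval x ≤ A * r ^ N * W.eval x) ∧
      ∀ x ∈ Icc q 1, 1 - H.eval x ≤ A * r ^ N := by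
  obtain ⟨G, B, y, hWG, hG, hGW, hGle, hGlt⟩ := exists_isPeaked_dvd hp hpq hq hW hWmono hWp
  have hq₀ : 0 < q := hp.trans_lt hpq
  have hy : 0 ≤ y := (hG.nonneg 0 ⟨le_rfl, zero_le_one⟩).trans (hGle 0 ⟨le_rfl, hp⟩)
  obtain ⟨A, r, hA, hr₀, hr₁, hsteep⟩ :=
    exists_polynomial_steep hy hGlt (hG.mem_Icc ⟨hq₀.le, hq⟩).2
  refine ⟨G.natDegree, A * max B 1, r, by positivity, hr₀, hr₁, fun N ↦ ?_⟩
  obtain ⟨S, hSdeg, ⟨S', rfl⟩, hS₁, hSmono, hSle, hSge⟩ := hsteep N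
  refine ⟨(X * S').comp G, natDegree_comp_le.trans (Nat.mul_le_mul_right _ hSdeg), ?_, ?_,
    fun x hx ↦ ?_, fun x hx ↦ ?_⟩
  · rw [mul_comp, X_comp]
    exact hWG.mul_right _
  · simpa only [eval_comp] using hG.comp_left hp (by simp) hS₁ hSmono
  · have hxI : x ∈ Icc 0 1 := ⟨hx.1, hx.2.trans (hpq.le.trans hq)⟩
    calc ((X * S').comp G).eval x ≤ A * r ^ N * G.eval x := by
          rw [eval_comp]
          exact hSle _ ⟨hG.nonneg x hxI, hGle x hx⟩
      _ ≤ A * r ^ N * (max B 1 * W.eval x) := by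
          gcongr
          exact (hGW x hxI).trans (mul_le_mul_of_nonneg_right (le_max_left _ _) (hW x hxI))
      _ = A * max B 1 * r ^ N * W.eval x := by ring
  · have hxI : x ∈ Icc 0 1 := ⟨hq₀.le.trans hx.1, hx.2⟩
    have hGqx : G.eval q ≤ G.eval x :=
      hG.strictMonoOn.monotoneOn ⟨hpq.le, hq⟩ ⟨hpq.le.trans hx.1, hx.2⟩ hx.1
    calc 1 - ((X * S').comp G).eval x ≤ A * r ^ N := by
          rw [eval_comp]
          exact hSge _ ⟨hGqx, (hG.mem_Icc hxI).2⟩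
      _ ≤ A * max B 1 * r ^ N := by
          gcongr
          exact le_mul_of_one_le_right hA.le (le_max_right _ _)

end PeakedPolynomial

section EvenZeroPoly

variable {ι : Type*} {J : Finset ι} {c : ι → ℝ} {k : ι → ℕ} {p q : ℝ}

/-- The polynomial with a zero of even order `2 * k j` at each `c j`, so that it has no sign
changes on the real line. -/
noncomputable def evenZeroPoly (J : Finset ι) (c : ι → ℝ) (k : ι → ℕ) : ℝ[X] :=
  ∏ j ∈ J, (X - C (c j)) ^ (2 * k j)

lemma eval_evenZeroPoly (x : ℝ) :
    (evenZeroPoly J c k).eval x = ∏ j ∈ J, (x - c j) ^ (2 * k j) := by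
  simp [evenZeroPoly, eval_prod]

lemma eval_evenZeroPoly_nonneg (x : ℝ) : 0 ≤ (evenZeroPoly J c k).eval x :=
  eval_evenZeroPoly x ▸ Finset.prod_nonneg fun _ _ ↦ (even_two_mul _).pow_nonneg _

lemma eval_evenZeroPoly_pos (hp : ∀ j ∈ J, c j < p) : 0 < (evenZeroPoly J c k).eval p :=
  eval_evenZeroPoly p ▸ Finset.prod_pos fun j hj ↦ pow_pos (sub_pos.2 (hp j hj)) _

lemma monotoneOn_eval_evenZeroPoly (hp : ∀ j ∈ J, c j < p) :
    MonotoneOn (fun x ↦ (evenZeroPoly J c k).eval x) (Ici p) := by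
  intro x hx y _ hxy
  simp only [eval_evenZeroPoly]
  refine Finset.prod_le_prod (fun j _ ↦ (even_two_mul _).pow_nonneg _) fun j hj ↦ ?_
  exact pow_le_pow_left₀ (sub_nonneg.2 ((hp j hj).le.trans hx)) (sub_le_sub_right hxy _) _

lemma pow_dvd_evenZeroPoly {j : ι} (hj : j ∈ J) :
    (X - C (c j)) ^ (2 * k j) ∣ evenZeroPoly J c k :=
  Finset.dvd_prod_of_mem _ hj

lemma exists_isPeaked_pow_dvd (hp : 0 ≤ p) (hpq : p < q) (hq : q ≤ 1) (hc : ∀ j ∈ J, c j < p)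
    (k : ι → ℕ) :
    ∃ (D : ℕ) (A r : ℝ), 0 < A ∧ 0 < r ∧ r < 1 ∧ ∀ N, ∃ H : ℝ[X],
      H.natDegree ≤ (2 * N + 1) * D ∧ (∀ j ∈ J, (X - C (c j)) ^ (2 * k j) ∣ H) ∧
      (IsPeaked p fun x ↦ H.eval x) ∧
      (∀ x ∈ Icc 0 p, H.eval x ≤ A * r ^ N * ∏ j ∈ J, (x - c j) ^ (2 * k j)) ∧
      ∀ x ∈ Icc q 1, 1 - H.eval x ≤ A * r ^ N := by
  obtain ⟨D, A, r, hA, hr₀, hr₁, hH⟩ := exists_isPeaked_geometric hp hpq hq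
    (fun x _ ↦ eval_evenZeroPoly_nonneg x)
    ((monotoneOn_eval_evenZeroPoly hc).mono Icc_subset_Ici_self)
    (eval_evenZeroPoly_pos (k := k) hc)
  refine ⟨D, A, r, hA, hr₀, hr₁, fun N ↦ ?_⟩
  obtain ⟨H, hdeg, hdvd, hpeak, hle, hge⟩ := hH N
  exact ⟨H, hdeg, fun j hj ↦ (pow_dvd_evenZeroPoly hj).trans hdvd, hpeak,
    by simpa only [eval_evenZeroPoly] using hle, hge⟩

end EvenZeroPoly

lemma iteratedDeriv_eval_comp_eq_zero {v : ℝ → ℝ} {s : ℝ} (hv : AnalyticAt ℝ v s) {H : ℝ[X]}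
    {m κ : ℕ} (hH : (X - C (v s)) ^ m ∣ H) (hκ : κ < m) :
    iteratedDeriv κ (fun t ↦ H.eval (v t)) s = 0 := by
  obtain ⟨P, rfl⟩ := hH
  have hP : AnalyticAt ℝ (fun t ↦ P.eval (v t)) s := hv.aeval_polynomial P
  have hsub : AnalyticAt ℝ (fun t ↦ v t - v s) s := hv.sub analyticAt_const
  have hone : 1 ≤ analyticOrderAt (fun t ↦ v t - v s) s :=
    Order.one_le_iff_ne_zero.2 (hsub.analyticOrderAt_ne_zero.2 (sub_self _))
  have hfactor : (fun t ↦ ((X - C (v s)) ^ m * P).eval (v t)) =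
      (fun t ↦ v t - v s) ^ m * fun t ↦ P.eval (v t) := by
    ext t; simp
  have hord : (m : ℕ∞) ≤ analyticOrderAt ((fun t ↦ v t - v s) ^ m * fun t ↦ P.eval (v t)) s := by
    rw [analyticOrderAt_mul (hsub.pow m) hP, analyticOrderAt_pow hsub]
    calc (m : ℕ∞) = m • 1 := by simp
      _ ≤ m • analyticOrderAt (fun t ↦ v t - v s) s := by gcongr
      _ ≤ _ := le_self_add
  rw [hfactor]
  exact (natCast_le_analyticOrderAt_iff_iteratedDeriv_eq_zero ((hsub.pow m).mul hP)).1 hord κ hκ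

lemma exists_mul_pow_le_exp {r : ℝ} (hr₀ : 0 < r) (hr₁ : r < 1) (A : ℝ) {E : ℕ} (hE : 0 < E) :
    ∃ δ > 0, ∀ᶠ m : ℕ in atTop, ∃ N, E * (N + 1) ≤ m ∧ A * r ^ N ≤ Real.exp (-(δ * m)) := by
  obtain ⟨ρ, rfl⟩ : ∃ ρ, r = Real.exp (-(2 * ρ)) :=
    ⟨-Real.log r / 2, by rw [mul_div_cancel₀ _ two_ne_zero, neg_neg, Real.exp_log hr₀]⟩
  have hρ : 0 < ρ := by simpa using hr₁
  have hlim : Tendsto (fun N : ℕ ↦ A * Real.exp (-ρ) ^ N) atTop (𝓝 (A * 0)) :=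
    (tendsto_pow_atTop_nhds_zero_of_lt_one (Real.exp_pos _).le (by simpa using hρ)).const_mul A
  have hN : Tendsto (fun m : ℕ ↦ m / E - 1) atTop atTop :=
    (tendsto_sub_atTop_nat 1).comp (Nat.tendsto_div_const_atTop hE.ne')
  refine ⟨ρ / E, by positivity, ?_⟩
  filter_upwards [eventually_ge_atTop E,
    hN.eventually (hlim.eventually_le_const (show A * 0 < Real.exp (-ρ) ^ 2 by
      rw [mul_zero]; positivity))] with m hm hdecay
  have hdiv : 1 ≤ m / E := (Nat.one_le_div_iff hE).2 hm
  obtain ⟨N, hmN⟩ : ∃ N, m / E = N + 1 := ⟨m / E - 1, by lia⟩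
  rw [hmN, Nat.add_sub_cancel] at hdecay
  refine ⟨N, hmN ▸ Nat.mul_div_le m E, ?_⟩
  have hm_lt : (m : ℝ) ≤ (N + 2) * E := by
    have := Nat.lt_mul_div_succ m hE
    rw [hmN] at this
    exact_mod_cast this.le.trans_eq (mul_comm _ _)
  calc A * Real.exp (-(2 * ρ)) ^ N = A * Real.exp (-ρ) ^ N * Real.exp (-ρ) ^ N := by
        rw [mul_assoc, ← mul_pow, ← Real.exp_add]; ring_nf
    _ ≤ Real.exp (-ρ) ^ 2 * Real.exp (-ρ) ^ N := by gcongr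
    _ = Real.exp (-(ρ * (N + 2))) := by
        rw [← pow_add, ← Real.exp_nat_mul]; push_cast; ring_nf
    _ ≤ Real.exp (-(ρ / E * m)) := by
        refine Real.exp_le_exp.2 (neg_le_neg ?_)
        calc ρ / E * m ≤ ρ / E * ((N + 2) * E) := by gcongr
          _ = ρ * (N + 2) := by field_simp

section FastDecreasing

variable {ι : Type*} {t₀ α β α' β' : ℝ}

lemma prod_abs_sin_pow_le_one (J : Finset ι) (s : ι → ℝ) (k : ι → ℕ) (t : ℝ) :
    ∏ j ∈ J, |Real.sin ((t - s j) / 2)| ^ k j ≤ 1 :=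
  Finset.prod_le_one (fun _ _ ↦ by positivity) fun _ _ ↦
    pow_le_one₀ (abs_nonneg _) (Real.abs_sin_le_one _)

lemma IsUnitPeak.exists_isTrigPoly_fast_decreasing {n : ℕ} {v : ℝ → ℝ}
    (hpeak : IsUnitPeak (-π) t₀ π v) (hv : IsTrigPoly n v) (hbal : v α' = v β') (hα' : -π ≤ α')
    (hα'α : α' < α) (hα : α ≤ t₀) (hβ : t₀ ≤ β) (hββ' : β < β') (hβ' : β' ≤ π) (J : Finset ι)
    (s : ι → ℝ) (hs : ∀ j ∈ J, s j ∈ Icc (-π) π \ Icc α' β') (k : ι → ℕ) :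
    ∃ (E : ℕ) (A r : ℝ), 0 < r ∧ r < 1 ∧ ∀ N, ∃ Q, IsTrigPoly (E * (N + 1)) Q ∧ Q t₀ = 1 ∧
      (∀ t ∈ Icc (-π) π, t ≠ t₀ → 0 ≤ Q t ∧ Q t < 1) ∧
      (∀ j ∈ J, ∀ κ < 2 * k j, iteratedDeriv κ Q (s j) = 0) ∧
      (∀ t ∈ Icc (-π) π \ Ioo α' β',
        Q t ≤ A * r ^ N * ∏ j ∈ J, |Real.sin ((t - s j) / 2)| ^ k j) ∧
      (∀ t ∈ Icc α β, 1 - Q t ≤ A * r ^ N) ∧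
      StrictMonoOn Q (Icc α' t₀) ∧ StrictAntiOn Q (Icc t₀ β') := by
  have hα't₀ : α' ∈ Icc (-π) t₀ := ⟨hα', hα'α.le.trans hα⟩
  have hβ't₀ : β' ∈ Icc t₀ π := ⟨hβ.trans hββ'.le, hβ'⟩
  have hαt₀ : α ∈ Icc (-π) t₀ := ⟨hα'.trans hα'α.le, hα⟩
  have hβt₀ : β ∈ Icc t₀ π := ⟨hβ, hββ'.le.trans hβ'⟩
  have hvα'lt : v α' < min (v α) (v β) := lt_min (hpeak.strictMonoOn hα't₀ hαt₀ hα'α)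
    (hbal ▸ hpeak.strictAntiOn hβt₀ hβ't₀ hββ')
  obtain ⟨D, A, r, hA, hr₀, hr₁, hH⟩ := exists_isPeaked_pow_dvd
    (hpeak.nonneg ⟨hα't₀.1, hα't₀.2.trans (hβt₀.1.trans hβt₀.2)⟩) hvα'lt
    (min_le_of_left_le (hpeak.mem_Icc ⟨hαt₀.1, hαt₀.2.trans (hβt₀.1.trans hβt₀.2)⟩).2)
    (fun j hj ↦ hpeak.lt_of_notMem_Icc hα't₀.2 hβ't₀.1 hbal (hs j hj)) k
  obtain ⟨B, hB⟩ := hv.exists_prod_sub_pow_le J s k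
  refine ⟨2 * D * n, A * max B 1, r, hr₀, hr₁, fun N ↦ ?_⟩
  obtain ⟨H, hdeg, hdvd, hHpeak, hHle, hHge⟩ := hH N
  refine ⟨fun t ↦ H.eval (v t), (hv.polynomial_eval hdeg).mono (by nlinarith [Nat.zero_le (D * n)]),
    by simp only [hpeak.peak, hHpeak.one], fun t ht htt₀ ↦ ⟨hHpeak.nonneg _ (hpeak.mem_Icc ht),
      hHpeak.lt_one _ ⟨hpeak.nonneg ht, hpeak.lt_one ht htt₀⟩⟩,
    fun j hj κ ↦ iteratedDeriv_eval_comp_eq_zero (hv.analyticAt _) (hdvd j hj),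
    fun t ht ↦ ?_, fun t ht ↦ ?_, hpeak.strictMonoOn_comp hα't₀ hHpeak.strictMonoOn,
    hpeak.strictAntiOn_comp hβ't₀ (hbal ▸ hHpeak.strictMonoOn)⟩
  · calc H.eval (v t) ≤ A * r ^ N * ∏ j ∈ J, (v t - v (s j)) ^ (2 * k j) :=
          hHle _ ⟨hpeak.nonneg ht.1, hpeak.le_of_notMem_Ioo hα't₀.2 hβ't₀.1 hbal ht⟩
      _ ≤ A * r ^ N * (max B 1 * ∏ j ∈ J, |Real.sin ((t - s j) / 2)| ^ k j) := by
          gcongr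
          exact (hB t).trans (by gcongr; exact le_max_left _ _)
      _ = A * max B 1 * r ^ N * ∏ j ∈ J, |Real.sin ((t - s j) / 2)| ^ k j := by ring
  · calc 1 - H.eval (v t) ≤ A * r ^ N := hHge _ ⟨hpeak.min_le_of_mem_Icc hαt₀ hβt₀ ht,
          (hpeak.mem_Icc ⟨hαt₀.1.trans ht.1, ht.2.trans hβt₀.2⟩).2⟩
      _ ≤ A * max B 1 * r ^ N := by
          gcongr
          exact le_mul_of_one_le_right hA.le (le_max_right _ _)

end FastDecreasing

/-- fast decreasing trigonometric polynomials with prescribed zeros. -/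
theorem stmt_1 (l : ℕ) (t₀ α β α' β' : ℝ)
    (h0 : -π < α') (h1 : α' < α) (h2 : α < t₀) (h3 : t₀ < β) (h4 : β < β') (h5 : β' < π)
    (αs : ℕ → ℝ) (hαs : ∀ j : ℕ, 1 ≤ j → j ≤ l → αs j ∈ Set.Ioo (-π) π \ Set.Icc α' β')
    (k : ℕ → ℕ) (hk : ∀ j : ℕ, 1 ≤ j → j ≤ l → 0 < k j) :
    ∃ δ₁ > (0 : ℝ), ∃ M : ℕ, ∀ m : ℕ, M ≤ m →
      ∃ Q : ℝ → ℝ, IsTrigPoly m Q ∧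
        Q t₀ = 1 ∧
        (∀ t ∈ Set.Ico (-π) π, t ≠ t₀ → 0 ≤ Q t ∧ Q t < 1) ∧
        (∀ j : ℕ, 1 ≤ j → j ≤ l → ∀ κ ≤ k j, iteratedDeriv κ Q (αs j) = 0) ∧
        (∀ t ∈ Set.Icc (-π) π \ Set.Ioo α' β',
          Q t ≤ min 1 (∏ j ∈ Finset.Icc 1 l, |Real.sin ((t - αs j) / 2)| ^ k j) *
            Real.exp (-(δ₁ * m))) ∧
        (∀ t ∈ Set.Icc α β, |Q t - 1| ≤ Real.exp (-(δ₁ * m))) ∧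
        (StrictMonoOn Q (Set.Icc α' α) ∨ StrictAntiOn Q (Set.Icc α' α)) ∧
        (StrictMonoOn Q (Set.Icc β β') ∨ StrictAntiOn Q (Set.Icc β β')) := by
  have hzeros : ∀ j ∈ Finset.Icc 1 l, αs j ∈ Icc (-π) π \ Icc α' β' := fun j hj ↦
    have ⟨hj₁, hjl⟩ := Finset.mem_Icc.1 hj
    ⟨Ioo_subset_Icc_self (hαs j hj₁ hjl).1, (hαs j hj₁ hjl).2⟩
  obtain ⟨n, v, hv, hpeak, hbal⟩ := exists_isTrigPoly_isUnitPeak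
    ⟨h0, h1.trans h2⟩ ⟨h3.trans h4, h5⟩
  obtain ⟨E, A, r, hr₀, hr₁, hQ⟩ := hpeak.exists_isTrigPoly_fast_decreasing hv hbal h0.le h1 h2.le
    h3.le h4 h5.le (Finset.Icc 1 l) αs hzeros k
  obtain ⟨δ, hδ, hrate⟩ := exists_mul_pow_le_exp hr₀ hr₁ A E.succ_pos
  obtain ⟨M, hM⟩ := eventually_atTop.1 hrate
  refine ⟨δ, hδ, M, fun m hm ↦ ?_⟩
  obtain ⟨N, hNm, hexp⟩ := hM m hm
  obtain ⟨Q, hQdeg, hQt₀, hQI, hQzero, hQsmall, hQnear, hQmono, hQanti⟩ := hQ N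
  refine ⟨Q, hQdeg.mono ((Nat.mul_le_mul_right _ E.le_succ).trans hNm), hQt₀,
    fun t ht ↦ hQI t (Ico_subset_Icc_self ht), fun j hj hjl κ hκ ↦ ?_, fun t ht ↦ ?_,
    fun t ht ↦ ?_, .inl (hQmono.mono (Icc_subset_Icc_right h2.le)),
    .inr (hQanti.mono (Icc_subset_Icc_left h3.le))⟩
  · exact hQzero j (Finset.mem_Icc.2 ⟨hj, hjl⟩) κ (by have := hk j hj hjl; lia)
  · rw [min_eq_right (prod_abs_sin_pow_le_one _ αs k t), mul_comm]
    exact (hQsmall t ht).trans (mul_le_mul_of_nonneg_right hexp (by positivity))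
  · have hQ1 : Q t ≤ 1 := by
      obtain rfl | htt₀ := eq_or_ne t t₀
      exacts [hQt₀.le, (hQI t ⟨by linarith [ht.1], by linarith [ht.2]⟩ htt₀).2.le]
    rw [abs_of_nonpos (sub_nonpos.2 hQ1), neg_sub]
    exact (hQnear t ht).trans hexp
end

section
/- Let I ⊂ (−π, π) be a closed set consisting of finitely many disjoint closed intervals, none of which is a singleton, and let k be a positive integer. Then there exists C = C(I, k) > 0 such that for every n and every trigonometric polynomial T_n of degree at most n, ‖T_n^{(k)}‖_I ≤ C n^{2k} ‖T_n‖_I. -/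
open scoped Real

/-- Sup-norm of a function over a set. -/
noncomputable def supNormR (f : ℝ → ℝ) (X : Set ℝ) : ℝ := ⨆ x ∈ X, |f x|

/-!
Every point of an interval is an endpoint of a subinterval of at least half its length, so after a
translation and a reflection it is enough to bound `T'(2α)` for a trigonometric polynomial `T`
of degree `n` with `|T| ≤ M` on `[-2α, 2α]`, where `0 < α < π / 2`. The even and the odd part of `T`
are bounded by `M` too, and at `2u` they equal `p (sin u)` and `cos u * q (sin u)` for algebraic
polynomials `p` and `q` of degree at most `2n`. As `cos` is bounded below on `[-α, α]`, both `p`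
and `q` are controlled on `[-sin α, sin α]`, and Markov's inequality at the endpoint `sin α`, which
is the extremal property of the Chebyshev polynomials, bounds their derivatives by `O(n²)`.
Iterating gives `n ^ (2k)`. The constant depends on the intervals only through a lower bound for
their lengths.
-/

open Polynomial Set

section Markov

variable {p : ℝ[X]} {n : ℕ}

lemma abs_derivative_eval_one_le_sq (hp : p.natDegree ≤ n)
    (hbound : ∀ x ∈ Icc (-1 : ℝ) 1, |p.eval x| ≤ 1) : |p.derivative.eval 1| ≤ (n : ℝ) ^ 2 := by
  have upper {q : ℝ[X]} (hq : q.natDegree ≤ n) (hb : ∀ x ∈ Icc (-1 : ℝ) 1, |q.eval x| ≤ 1) :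
      q.derivative.eval 1 ≤ (n : ℝ) ^ 2 := by
    simpa [Chebyshev.derivative_T_eval_one] using
      Chebyshev.eval_iterate_derivative_le_of_forall_abs_le_one (k := 1) le_rfl
        (natDegree_le_iff_degree_le.1 hq) hb
  have lower := upper (q := -p) (by simpa using hp) (by simpa using hbound)
  rw [derivative_neg, eval_neg] at lower
  exact abs_le.2 ⟨by linarith, upper hp hbound⟩

lemma abs_derivative_eval_one_le {M : ℝ} (hp : p.natDegree ≤ n)
    (hbound : ∀ x ∈ Icc (-1 : ℝ) 1, |p.eval x| ≤ M) :
    |p.derivative.eval 1| ≤ (n : ℝ) ^ 2 * M := by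
  have hM : 0 ≤ M := (abs_nonneg _).trans (hbound 1 (by simp))
  rcases hM.eq_or_lt with rfl | hM
  · have hroot : Icc (-1 : ℝ) 1 ⊆ {x | p.IsRoot x} := fun x hx =>
      abs_nonpos_iff.1 (hbound x hx)
    simp [p.eq_zero_of_infinite_isRoot ((Icc_infinite (by norm_num)).mono hroot)]
  · have := abs_derivative_eval_one_le_sq (p := C M⁻¹ * p)
      ((natDegree_C_mul_le _ _).trans hp) fun x hx => by
        rw [eval_mul, eval_C, abs_mul, abs_of_pos (inv_pos.2 hM), inv_mul_le_one₀ hM]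
        exact hbound x hx
    rwa [derivative_C_mul, eval_mul, eval_C, abs_mul, abs_of_pos (inv_pos.2 hM),
      inv_mul_le_iff₀ hM, mul_comm] at this

lemma abs_derivative_eval_right_le {M c d : ℝ} (hcd : c < d) (hp : p.natDegree ≤ n)
    (hbound : ∀ x ∈ Icc c d, |p.eval x| ≤ M) :
    |p.derivative.eval d| ≤ 2 * (n : ℝ) ^ 2 / (d - c) * M := by
  have hdeg : (p.comp (C ((d - c) / 2) * X + C ((c + d) / 2))).natDegree ≤ n := by
    refine natDegree_comp_le.trans ?_
    exact (Nat.mul_le_mul hp natDegree_linear_le).trans_eq (mul_one n)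
  have h := abs_derivative_eval_one_le hdeg (M := M) fun x hx => by
    rw [eval_comp]
    apply hbound
    simp only [eval_add, eval_mul, eval_C, eval_X]
    constructor <;> nlinarith [hx.1, hx.2]
  have hd : (d - c) / 2 + (c + d) / 2 = d := by ring
  simp only [derivative_comp, derivative_add, derivative_mul, derivative_C, derivative_X, zero_mul,
    mul_one, zero_add, add_zero, eval_mul, eval_C, eval_comp, eval_add, eval_X, hd, abs_mul,
    abs_of_pos (half_pos (sub_pos.2 hcd))] at h
  rw [div_mul_eq_mul_div, le_div_iff₀ (sub_pos.2 hcd)]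
  linarith

end Markov

lemma exists_eval_sin_eq_cos (j : ℕ) :
    ∃ p : ℝ[X], p.natDegree ≤ 2 * j ∧ ∀ u, p.eval (Real.sin u) = Real.cos (j * (2 * u)) := by
  refine ⟨(Chebyshev.T ℝ j).comp (1 - 2 * X ^ 2), ?_, fun u => ?_⟩
  · have hdeg : (1 - 2 * X ^ 2 : ℝ[X]).natDegree ≤ 2 := by compute_degree
    refine natDegree_comp_le.trans ?_
    rw [Chebyshev.natDegree_T, Int.natAbs_natCast, mul_comm]
    gcongr
  · have hcos := Chebyshev.T_real_cos (2 * u) j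
    rw [Real.cos_two_mul_eq_one_sub, Int.cast_natCast] at hcos
    simpa using hcos

lemma exists_cos_mul_eval_sin_eq_sin (j : ℕ) :
    ∃ q : ℝ[X], q.natDegree ≤ 2 * j ∧
      ∀ u, Real.cos u * q.eval (Real.sin u) = Real.sin (j * (2 * u)) := by
  rcases j with _ | j
  · exact ⟨0, by simp⟩
  refine ⟨2 * X * (Chebyshev.U ℝ j).comp (1 - 2 * X ^ 2), ?_, fun u => ?_⟩
  · have hdeg : (1 - 2 * X ^ 2 : ℝ[X]).natDegree ≤ 2 := by compute_degree
    have hX : (2 * X : ℝ[X]).natDegree ≤ 1 := by compute_degree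
    have hU : ((Chebyshev.U ℝ j).comp (1 - 2 * X ^ 2)).natDegree ≤ j * 2 := by
      refine natDegree_comp_le.trans ?_
      rw [Chebyshev.natDegree_U_natCast]
      gcongr
    exact natDegree_mul_le.trans (by lia)
  · have hsin := Chebyshev.U_real_cos (2 * u) j
    rw [Real.cos_two_mul_eq_one_sub, Real.sin_two_mul, Int.cast_natCast] at hsin
    simp only [eval_mul, eval_ofNat, eval_X, eval_comp, eval_sub, eval_one, eval_pow]
    push_cast
    rw [← hsin]
    ring

namespace IsTrigPoly

variable {n : ℕ} {T : ℝ → ℝ}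

lemma bddAbove_range_abs (hT : IsTrigPoly n T) : BddAbove (range fun t => |T t|) := by
  obtain ⟨A, B, rfl⟩ := hT
  refine ⟨∑ j ∈ Finset.range (n + 1), (|A j| * 1 + |B j| * 1), ?_⟩
  rintro _ ⟨t, rfl⟩
  refine (Finset.abs_sum_le_sum_abs _ _).trans (Finset.sum_le_sum fun j _ => ?_)
  refine (abs_add_le _ _).trans ?_
  rw [abs_mul, abs_mul]
  gcongr
  exacts [Real.abs_cos_le_one _, Real.abs_sin_le_one _]

lemma deriv_eq_zero (hT : IsTrigPoly 0 T) (t : ℝ) : deriv T t = 0 := by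
  obtain ⟨A, B, rfl⟩ := hT
  simp

protected lemma deriv (hT : IsTrigPoly n T) : IsTrigPoly n (deriv T) := by
  obtain ⟨A, B, rfl⟩ := hT
  refine ⟨fun j => j * B j, fun j => -(j * A j), ?_⟩
  funext t
  refine (HasDerivAt.fun_sum fun j _ => ?_).deriv
  have hlin : HasDerivAt (fun t : ℝ => (j : ℝ) * t) j t := by
    simpa using (hasDerivAt_id t).const_mul (j : ℝ)
  convert! (hlin.cos.const_mul (A j)).add (hlin.sin.const_mul (B j)) using 1
  ring

lemma comp_add_const (hT : IsTrigPoly n T) (s : ℝ) : IsTrigPoly n fun t => T (t + s) := by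
  obtain ⟨A, B, rfl⟩ := hT
  refine ⟨fun j => A j * Real.cos (j * s) + B j * Real.sin (j * s),
    fun j => B j * Real.cos (j * s) - A j * Real.sin (j * s), ?_⟩
  funext t
  refine Finset.sum_congr rfl fun j _ => ?_
  rw [mul_add, Real.cos_add, Real.sin_add]
  ring

lemma comp_neg (hT : IsTrigPoly n T) : IsTrigPoly n fun t => T (-t) := by
  obtain ⟨A, B, rfl⟩ := hT
  exact ⟨A, -B, by simp⟩

lemma exists_half_angle_polynomials (hT : IsTrigPoly n T) :
    ∃ p q : ℝ[X], p.natDegree ≤ 2 * n ∧ q.natDegree ≤ 2 * n ∧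
      (∀ u, T (2 * u) = p.eval (Real.sin u) + Real.cos u * q.eval (Real.sin u)) ∧
      ∀ u, T (-(2 * u)) = p.eval (Real.sin u) - Real.cos u * q.eval (Real.sin u) := by
  obtain ⟨A, B, rfl⟩ := hT
  choose p hp hcos using exists_eval_sin_eq_cos
  choose q hq hsin using exists_cos_mul_eval_sin_eq_sin
  have natDegree_combination_le {r : ℕ → ℝ[X]} (hr : ∀ j, (r j).natDegree ≤ 2 * j)
      (a : ℕ → ℝ) : (∑ j ∈ Finset.range (n + 1), C (a j) * r j).natDegree ≤ 2 * n :=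
    natDegree_sum_le_of_forall_le _ _ fun j hj =>
      (natDegree_C_mul_le _ _).trans ((hr j).trans (by have := Finset.mem_range.1 hj; lia))
  refine ⟨_, _, natDegree_combination_le hp A, natDegree_combination_le hq B,
    fun u => ?_, fun u => ?_⟩
  all_goals
    simp only [eval_finsetSum, eval_mul, eval_C, Finset.mul_sum, mul_left_comm (Real.cos u),
      hcos, hsin, mul_neg, Real.cos_neg, Real.sin_neg, Finset.sum_add_distrib,
      Finset.sum_neg_distrib, sub_eq_add_neg]

section Endpoint

variable {α M : ℝ}

lemma exists_bounded_half_angle_polynomials (hT : IsTrigPoly n T) (hα₀ : 0 < α) (hα : α < π / 2)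
    (hbound : ∀ t ∈ Icc (-(2 * α)) (2 * α), |T t| ≤ M) :
    ∃ p q : ℝ[X], p.natDegree ≤ 2 * n ∧ q.natDegree ≤ 2 * n ∧
      (∀ u, T (2 * u) = p.eval (Real.sin u) + Real.cos u * q.eval (Real.sin u)) ∧
      (∀ x ∈ Icc (-Real.sin α) (Real.sin α), |p.eval x| ≤ M) ∧
      ∀ x ∈ Icc (-Real.sin α) (Real.sin α), |q.eval x| ≤ M / Real.cos α := by
  obtain ⟨p, q, hp, hq, hpos, hneg⟩ := hT.exists_half_angle_polynomials
  have even_odd_bound {u : ℝ} (hu : u ∈ Icc (-α) α) :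
      |p.eval (Real.sin u)| ≤ M ∧ |Real.cos u * q.eval (Real.sin u)| ≤ M := by
    have h₁ := hbound (2 * u) ⟨by linarith [hu.1], by linarith [hu.2]⟩
    have h₂ := hbound (-(2 * u)) ⟨by linarith [hu.2], by linarith [hu.1]⟩
    rw [hpos, abs_le] at h₁
    rw [hneg, abs_le] at h₂
    exact ⟨abs_le.2 ⟨by linarith, by linarith⟩, abs_le.2 ⟨by linarith, by linarith⟩⟩
  have exists_angle {x : ℝ} (hx : x ∈ Icc (-Real.sin α) (Real.sin α)) :
      ∃ u ∈ Icc (-α) α, Real.sin u = x :=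
    intermediate_value_Icc (by linarith) Real.continuous_sin.continuousOn (by rwa [Real.sin_neg])
  refine ⟨p, q, hp, hq, hpos, fun x hx => ?_, fun x hx => ?_⟩
  · obtain ⟨u, hu, rfl⟩ := exists_angle hx
    exact (even_odd_bound hu).1
  · obtain ⟨u, hu, rfl⟩ := exists_angle hx
    have hcosα : 0 < Real.cos α := Real.cos_pos_of_mem_Ioo ⟨by linarith, hα⟩
    have hcos : Real.cos α ≤ Real.cos u := by
      rw [← Real.cos_abs u]
      exact Real.cos_le_cos_of_nonneg_of_le_pi (abs_nonneg u) (by linarith) (abs_le.2 hu)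
    have hodd := (even_odd_bound hu).2
    rw [abs_mul, abs_of_pos (hcosα.trans_le hcos)] at hodd
    rw [le_div_iff₀' hcosα]
    exact (mul_le_mul_of_nonneg_right hcos (abs_nonneg _)).trans hodd

lemma abs_deriv_two_mul_le_add (hT : IsTrigPoly n T) (hα₀ : 0 < α) (hα : α < π / 2)
    (hbound : ∀ t ∈ Icc (-(2 * α)) (2 * α), |T t| ≤ M) :
    |deriv T (2 * α)| ≤ (4 * (n : ℝ) ^ 2 / Real.tan α + Real.tan α / 2) * M := by
  obtain ⟨p, q, hp, hq, hTpq, hpM, hqM⟩ := hT.exists_bounded_half_angle_polynomials hα₀ hα hbound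
  have hsin : 0 < Real.sin α := Real.sin_pos_of_pos_of_lt_pi hα₀ (by linarith)
  have hcos : 0 < Real.cos α := Real.cos_pos_of_mem_Ioo ⟨by linarith, hα⟩
  have hderiv : 2 * deriv T (2 * α) = p.derivative.eval (Real.sin α) * Real.cos α +
      (-Real.sin α * q.eval (Real.sin α) +
        Real.cos α * (q.derivative.eval (Real.sin α) * Real.cos α)) := by
    rw [← smul_eq_mul 2, ← deriv_comp_mul_left, funext hTpq]
    have hsin' := Real.hasDerivAt_sin α
    exact (((p.hasDerivAt _).comp α hsin').add
      ((Real.hasDerivAt_cos α).mul ((q.hasDerivAt _).comp α hsin'))).deriv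
  have hp' := abs_derivative_eval_right_le (by linarith) hp hpM
  have hq' := abs_derivative_eval_right_le (by linarith) hq hqM
  have hqα := hqM _ ⟨by linarith, le_rfl⟩
  have htriangle : 2 * |deriv T (2 * α)| ≤
      |p.derivative.eval (Real.sin α)| * Real.cos α + (Real.sin α * |q.eval (Real.sin α)| +
        Real.cos α * (|q.derivative.eval (Real.sin α)| * Real.cos α)) := by
    have habs : 2 * |deriv T (2 * α)| = |2 * deriv T (2 * α)| := by rw [abs_mul, abs_two]
    rw [habs, hderiv]
    refine (abs_add_le _ _).trans ((add_le_add_right (abs_add_le _ _) _).trans_eq ?_)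
    simp only [abs_mul, abs_neg, abs_of_pos hsin, abs_of_pos hcos]
  grw [hp', hq', hqα] at htriangle
  rw [Real.tan_eq_sin_div_cos]
  refine le_of_mul_le_mul_left (htriangle.trans_eq ?_) two_pos
  push_cast
  field_simp
  ring

lemma abs_deriv_two_mul_le (hT : IsTrigPoly n T) (hα₀ : 0 < α) (hα : α < π / 2)
    (hbound : ∀ t ∈ Icc (-(2 * α)) (2 * α), |T t| ≤ M) :
    |deriv T (2 * α)| ≤ (4 / Real.tan α + Real.tan α / 2) * (n : ℝ) ^ 2 * M := by
  rcases n.eq_zero_or_pos with rfl | hn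
  · simp [hT.deriv_eq_zero]
  have hM : 0 ≤ M := (abs_nonneg _).trans (hbound (2 * α) ⟨by linarith, le_rfl⟩)
  have htan := Real.tan_pos_of_pos_of_lt_pi_div_two hα₀ hα
  have hn : (1 : ℝ) ≤ (n : ℝ) ^ 2 := one_le_pow₀ (by exact_mod_cast hn)
  calc |deriv T (2 * α)| ≤ (4 * (n : ℝ) ^ 2 / Real.tan α + Real.tan α / 2 * 1) * M := by
        simpa using hT.abs_deriv_two_mul_le_add hα₀ hα hbound
    _ ≤ (4 * (n : ℝ) ^ 2 / Real.tan α + Real.tan α / 2 * (n : ℝ) ^ 2) * M := by gcongr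
    _ = _ := by ring

lemma abs_deriv_right_le {t : ℝ} (hT : IsTrigPoly n T) (hα₀ : 0 < α) (hα : α < π / 2)
    (hbound : ∀ x ∈ Icc (t - 4 * α) t, |T x| ≤ M) :
    |deriv T t| ≤ (4 / Real.tan α + Real.tan α / 2) * (n : ℝ) ^ 2 * M := by
  have := (hT.comp_add_const (t - 2 * α)).abs_deriv_two_mul_le hα₀ hα fun x hx =>
    hbound _ ⟨by linarith [hx.1], by linarith [hx.2]⟩
  rwa [deriv_comp_add_const, add_sub_cancel] at this

lemma abs_deriv_left_le {t : ℝ} (hT : IsTrigPoly n T) (hα₀ : 0 < α) (hα : α < π / 2)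
    (hbound : ∀ x ∈ Icc t (t + 4 * α), |T x| ≤ M) :
    |deriv T t| ≤ (4 / Real.tan α + Real.tan α / 2) * (n : ℝ) ^ 2 * M := by
  have := hT.comp_neg.abs_deriv_right_le (t := -t) hα₀ hα fun x hx =>
    hbound _ ⟨by linarith [hx.2], by linarith [hx.1]⟩
  rwa [deriv_comp_neg, neg_neg, abs_neg] at this

end Endpoint

end IsTrigPoly

/-- `I` is a (possibly infinite, possibly overlapping) union of closed intervals of length `δ`:
the sets on which a Markov inequality holds with a constant that depends only on `δ`. -/
def IsUnionOfIntervals (δ : ℝ) (I : Set ℝ) : Prop :=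
  ∀ t ∈ I, ∃ c, t ∈ Icc c (c + δ) ∧ Icc c (c + δ) ⊆ I

lemma isUnionOfIntervals_Icc {δ c d : ℝ} (hδ₀ : 0 ≤ δ) (hδ : δ ≤ d - c) :
    IsUnionOfIntervals δ (Icc c d) := by
  rintro t ⟨hct, htd⟩
  refine ⟨min t (d - δ), ⟨min_le_left _ _, ?_⟩, Icc_subset_Icc ?_ ?_⟩
  · rw [← min_add_add_right, le_min_iff]
    constructor <;> linarith
  · exact le_min hct (by linarith)
  · linarith [min_le_right t (d - δ)]

lemma IsUnionOfIntervals.iUnion {ι : Sort*} {δ : ℝ} {I : ι → Set ℝ}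
    (hI : ∀ i, IsUnionOfIntervals δ (I i)) : IsUnionOfIntervals δ (⋃ i, I i) := by
  intro t ht
  obtain ⟨i, hi⟩ := mem_iUnion.1 ht
  obtain ⟨c, htc, hc⟩ := hI i t hi
  exact ⟨c, htc, hc.trans (subset_iUnion I i)⟩

lemma exists_isUnionOfIntervals_iUnion_Icc {ι : Type*} [Finite ι] {c d : ι → ℝ}
    (hcd : ∀ i, c i < d i) : ∃ δ > 0, IsUnionOfIntervals δ (⋃ i, Icc (c i) (d i)) := by
  have hδ : ∀ᶠ δ in nhdsWithin (0 : ℝ) (Ioi 0), ∀ i, δ ≤ d i - c i :=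
    Filter.eventually_all.2 fun i =>
      eventually_nhdsWithin_of_eventually_nhds (eventually_le_nhds (sub_pos.2 (hcd i)))
  obtain ⟨δ, hδ, hδ₀⟩ := (hδ.and self_mem_nhdsWithin).exists
  exact ⟨δ, hδ₀, IsUnionOfIntervals.iUnion fun i =>
    isUnionOfIntervals_Icc (le_of_lt hδ₀) (hδ i)⟩

namespace IsTrigPoly

lemma exists_forall_abs_deriv_le {δ : ℝ} (hδ : 0 < δ) :
    ∃ K > 0, ∀ I, IsUnionOfIntervals δ I → ∀ n T, IsTrigPoly n T → ∀ M, (∀ t ∈ I, |T t| ≤ M) →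
      ∀ t ∈ I, |deriv T t| ≤ K * (n : ℝ) ^ 2 * M := by
  obtain ⟨α, hα₀, hα⟩ : ∃ α, 0 < α ∧ α < min (δ / 8) (π / 2) :=
    exists_between (lt_min (by positivity) Real.pi_div_two_pos)
  obtain ⟨hαδ, hαπ⟩ := lt_min_iff.1 hα
  have htan := Real.tan_pos_of_pos_of_lt_pi_div_two hα₀ hαπ
  refine ⟨4 / Real.tan α + Real.tan α / 2, by positivity, fun I hI n T hT M hM t ht => ?_⟩
  obtain ⟨c, ⟨hct, htc⟩, hcI⟩ := hI t ht
  rcases le_total (c + 4 * α) t with h | h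
  · exact hT.abs_deriv_right_le hα₀ hαπ fun x hx =>
      hM x (hcI ⟨by linarith [hx.1], by linarith [hx.2]⟩)
  · exact hT.abs_deriv_left_le hα₀ hαπ fun x hx =>
      hM x (hcI ⟨by linarith [hx.1], by linarith [hx.2]⟩)

lemma exists_forall_abs_iteratedDeriv_le {δ : ℝ} (hδ : 0 < δ) (k : ℕ) :
    ∃ C > 0, ∀ I, IsUnionOfIntervals δ I → ∀ n T, IsTrigPoly n T → ∀ M, (∀ t ∈ I, |T t| ≤ M) →
      ∀ t ∈ I, |iteratedDeriv k T t| ≤ C * (n : ℝ) ^ (2 * k) * M := by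
  induction k with
  | zero => exact ⟨1, one_pos, fun I _ n T _ M hM t ht => by simpa using hM t ht⟩
  | succ k ih =>
    obtain ⟨C, hC, hiter⟩ := ih
    obtain ⟨K, hK, hderiv⟩ := exists_forall_abs_deriv_le hδ
    refine ⟨C * K, mul_pos hC hK, fun I hI n T hT M hM t ht => ?_⟩
    rw [iteratedDeriv_succ']
    calc |iteratedDeriv k (deriv T) t| ≤ C * (n : ℝ) ^ (2 * k) * (K * (n : ℝ) ^ 2 * M) :=
          hiter I hI n _ hT.deriv _ (hderiv I hI n T hT M hM) t ht
      _ = C * K * (n : ℝ) ^ (2 * (k + 1)) * M := by ring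

end IsTrigPoly

lemma abs_le_supNormR {f : ℝ → ℝ} {I : Set ℝ} {x : ℝ} (hf : BddAbove ((fun t => |f t|) '' I))
    (hx : x ∈ I) : |f x| ≤ supNormR f I := by
  have hbdd : BddAbove (⋃ y, range fun _ : y ∈ I => |f y|) := by
    refine hf.mono (iUnion_subset fun y => ?_)
    rintro _ ⟨hy, rfl⟩
    exact ⟨y, hy, rfl⟩
  exact le_ciSup₂ hbdd x hx

theorem stmt_2_general {δ : ℝ} (hδ : 0 < δ) (k : ℕ) :
    ∃ C > (0 : ℝ), ∀ I : Set ℝ, IsUnionOfIntervals δ I → ∀ n : ℕ, ∀ T : ℝ → ℝ, IsTrigPoly n T →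
      ∀ t ∈ I, |iteratedDeriv k T t| ≤ C * (n : ℝ) ^ (2 * k) * supNormR T I := by
  obtain ⟨C, hC, H⟩ := IsTrigPoly.exists_forall_abs_iteratedDeriv_le hδ k
  exact ⟨C, hC, fun I hI n T hT =>
    H I hI n T hT _ fun _ hx =>
      abs_le_supNormR (hT.bddAbove_range_abs.mono (image_subset_range _ _)) hx⟩

/-- rough Markov-type inequality on a finite union of intervals. -/
theorem stmt_2 (m : ℕ) (c d : Fin m → ℝ)
    (hcd : ∀ j, c j < d j)
    (hsub : ∀ j, Set.Icc (c j) (d j) ⊆ Set.Ioo (-π) π)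
    (hdisj : ∀ i j, i ≠ j → Disjoint (Set.Icc (c i) (d i)) (Set.Icc (c j) (d j)))
    (I : Set ℝ) (hI : I = ⋃ j, Set.Icc (c j) (d j))
    (k : ℕ) (hk : 0 < k) :
    ∃ C > (0 : ℝ), ∀ n : ℕ, ∀ T : ℝ → ℝ, IsTrigPoly n T →
      ∀ t ∈ I, |iteratedDeriv k T t| ≤ C * (n : ℝ) ^ (2 * k) * supNormR T I := by
  obtain ⟨δ, hδ, hδI⟩ := exists_isUnionOfIntervals_iUnion_Icc hcd
  exact (stmt_2_general hδ k).imp fun _ ⟨hC, H⟩ => ⟨hC, H I (hI ▸ hδI)⟩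
end
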